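/- Let $p$ be an odd prime, $W$ a finite 2-group, and $E \le \mathrm{Aut}(W)$ a non-cyclic abelian $p$-subgroup. If for every non-identity $e \in E$ the fixed-point subgroup $C_W(e)$ contains at most one involution, then $p = 3$, $|E| = 9$, $W$ is isomorphic to an extraspecial group $2^{1+4}_+$, $2^{1+6}_-$, or $2^{1+8}_+$, and $C_W(E) = Z(W)$. -/

import Mathlib

/-- The fixed points of a group of automorphisms `E ≤ Aut W`, `C_W(E)`, as a subgroup. -/
def fixedSubgroup {W : Type*} [Group W] (E : Subgroup (MulAut W)) : Subgroup W where
  carrier := {w : W | ∀ e ∈ E, e w = w}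
  one_mem' := fun e _ => map_one e
  mul_mem' := by
    intro a b ha hb e he
    rw [map_mul, ha e he, hb e he]
  inv_mem' := by
    intro a ha e he
    rw [map_inv, ha e he]

/-- An extraspecial group: `Z(W) = W' = Φ(W)` of order `2`
(here for 2-groups; `Φ(W) = Z(W)` is automatic). -/
def IsExtraspecial (W : Type*) [Group W] : Prop :=
  Subgroup.center W = commutator W ∧ frattini W = Subgroup.center W ∧
    Nat.card (Subgroup.center W) = 2

/-- `W` (of order `2^(1+2n)`) is of plus type: it contains an elementary abelian subgroup of
order `2^(n+1)`. -/
def IsPlusType (W : Type*) [Group W] (n : ℕ) : Prop :=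
  ∃ A : Subgroup W, Nat.card A = 2 ^ (n + 1) ∧ ∀ a ∈ A, a ^ 2 = 1

namespace ESA
section

/-- Noncyclic commutative finite `p`-groups contain `C_p × C_p`. -/
theorem exists_rank_two {G : Type*} [CommGroup G] [Finite G] {p : ℕ} (hp : p.Prime)
    (hG : IsPGroup p G) (hnc : ¬ IsCyclic G) :
    ∃ a b : G, a ^ p = 1 ∧ b ^ p = 1 ∧ b ≠ 1 ∧ a ∉ Subgroup.zpowers b := by
  have := Fact.mk hp
  obtain ⟨g, hg⟩ := Monoid.exists_orderOf_eq_exponent (G := G) Monoid.ExponentExists.of_finite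
  have hne : ∃ h : G, h ∉ Subgroup.zpowers g := by
    by_contra! hcon
    exact hnc ⟨g, hcon⟩
  obtain ⟨h, hh, hmin⟩ := (Set.toFinite {h : G | h ∉ Subgroup.zpowers g}).exists_minimalFor orderOf _ hne
  obtain ⟨m, hm⟩ := (IsPGroup.iff_orderOf.1 hG) g
  have hm0 : m ≠ 0 := by
    rintro rfl
    rw [pow_zero] at hm
    have h1 : h ^ orderOf g = 1 := by rw [hg]; exact Monoid.pow_exponent_eq_one h
    rw [hm, pow_one] at h1
    exact hh (h1 ▸ one_mem _)
  obtain ⟨m, rfl⟩ := Nat.exists_eq_succ_of_ne_zero hm0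
  have hhp : h ^ p ∈ Subgroup.zpowers g := by
    by_contra hcon
    have h1 := hmin hcon
    obtain ⟨k, hk⟩ := (IsPGroup.iff_orderOf.1 hG) h
    have hk0 : k ≠ 0 := by
      rintro rfl
      rw [pow_zero, orderOf_eq_one_iff] at hk
      exact hh (hk ▸ one_mem _)
    have h2 : orderOf (h ^ p) = orderOf h / p :=
      orderOf_pow_of_dvd hp.ne_zero (hk ▸ dvd_pow_self p hk0)
    have h3 : orderOf h / p < orderOf h := Nat.div_lt_self (orderOf_pos h) hp.one_lt
    rw [h2] at h1
    have := h1 h3.le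
    omega
  obtain ⟨k, hk⟩ := hhp
  have h1 : h ^ p ^ (m + 1) = 1 := by
    have h1 : h ^ orderOf g = 1 := by rw [hg]; exact Monoid.pow_exponent_eq_one h
    rwa [hm] at h1
  have h2 : (p : ℤ) ∣ k := by
    have h3 : g ^ (k * (p ^ m : ℕ)) = 1 := by
      have hk' : g ^ k = h ^ p := hk
      rw [zpow_mul, hk', zpow_natCast, ← pow_mul, ← pow_succ', h1]
    have h4 := orderOf_dvd_iff_zpow_eq_one.2 h3
    rw [hm, pow_succ', Nat.cast_mul] at h4
    exact Int.dvd_of_mul_dvd_mul_right (by exact_mod_cast (pow_pos hp.pos m).ne') h4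
  obtain ⟨l, rfl⟩ := h2
  refine ⟨h * g ^ (-l), g ^ p ^ m, ?_, ?_, ?_, ?_⟩
  · have hk' : g ^ ((p:ℤ) * l) = h ^ p := hk
    rw [mul_pow, ← hk', ← zpow_natCast, ← zpow_mul, ← zpow_add]
    simp [mul_comm]
  · rw [← pow_mul, ← pow_succ, ← Nat.succ_eq_add_one, ← hm, pow_orderOf_eq_one]
  · intro h5
    have := orderOf_dvd_of_pow_eq_one h5
    rw [hm] at this
    have := Nat.le_of_dvd (pow_pos hp.pos m) this
    have := Nat.pow_lt_pow_right hp.one_lt (Nat.lt_succ_self m)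
    omega
  · intro h5
    have h6 : Subgroup.zpowers (g ^ p ^ m) ≤ Subgroup.zpowers g :=
      Subgroup.zpowers_le.2 (Subgroup.pow_mem _ (Subgroup.mem_zpowers g) _)
    have h7 := (Subgroup.zpowers g).mul_mem (h6 h5) (Subgroup.zpow_mem _ (Subgroup.mem_zpowers g) l)
    rw [mul_assoc, ← zpow_add] at h7
    simp at h7
    exact hh h7

/-- A coset of an invariant subgroup of coprime order stabilised by an automorphism of `p`-power
order contains a fixed point. -/
theorem fixed_in_coset {W : Type*} [Group W] [Finite W] {p : ℕ} (hp : p.Prime)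
    (X : Subgroup W) (c : MulAut W) {n : ℕ} (hc : c ^ p ^ n = 1) (hX : ∀ x ∈ X, c x ∈ X)
    (hcop : ¬ p ∣ Nat.card X) (u : W) (hu : u⁻¹ * c u ∈ X) :
    ∃ w, c w = w ∧ u⁻¹ * w ∈ X := by
  classical
  have := Fact.mk hp
  have := Fintype.ofFinite W
  let α := {w : W // u⁻¹ * w ∈ X}
  let f : Function.End α := fun w => ⟨c w.1, by
    have h := X.mul_mem hu (hX _ w.2)
    simpa [mul_assoc] using h⟩
  have hf : ∀ k : ℕ, ∀ w : α, ((f ^ k) w).1 = (c ^ k) w.1 := by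
    intro k
    induction k with
    | zero => intro w; rfl
    | succ k ih =>
      intro w
      rw [pow_succ', pow_succ']
      change c ((f ^ k) w).1 = c ((c ^ k) w.1)
      rw [ih]
  have hfp : f ^ p ^ n = 1 := by
    funext w
    apply Subtype.ext
    rw [hf, hc]; rfl
  have hmod := Equiv.Perm.card_fixedPoints_modEq hfp
  have hcard : Fintype.card α = Nat.card X := by
    rw [← Nat.card_eq_fintype_card]
    refine Nat.card_congr ⟨fun w => ⟨u⁻¹ * w.1, w.2⟩, fun x => ⟨u * x.1, by simp⟩, ?_, ?_⟩
    · intro w; simp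
    · intro w; simp
  have hne : Fintype.card f.fixedPoints ≠ 0 := by
    intro h0
    rw [h0, hcard] at hmod
    exact hcop ((Nat.modEq_zero_iff_dvd).1 hmod)
  obtain ⟨w, hw⟩ := Fintype.card_pos_iff.1 (Nat.pos_of_ne_zero hne)
  exact ⟨w.1, congrArg Subtype.val hw, w.2⟩

/-- `Y` is invariant under `E`. -/
def Inv {W : Type*} [Group W] (E : Subgroup (MulAut W)) (Y : Subgroup W) : Prop :=
  ∀ e ∈ E, ∀ y ∈ Y, e y ∈ Y

theorem pow_fix {W : Type*} [Group W] {p : ℕ} {E : Subgroup (MulAut W)}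
    (hE : IsPGroup p E) {e : MulAut W} (he : e ∈ E) {m : ℕ} (hm : m.Coprime p) {w : W}
    (h : (e ^ m) w = w) : e w = w := by
  obtain ⟨n, hn⟩ := hE ⟨e, he⟩
  have hn' : e ^ p ^ n = 1 := congrArg Subtype.val hn
  have hcop : m.Coprime (orderOf e) :=
    Nat.Coprime.coprime_dvd_right (orderOf_dvd_of_pow_eq_one hn') (hm.pow_right n)
  obtain ⟨k, hk⟩ := exists_pow_eq_self_of_coprime hcop
  have : ∀ k : ℕ, ((e ^ m) ^ k) w = w := by
    intro k
    induction k with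
    | zero => rfl
    | succ k ih => rw [pow_succ, MulAut.mul_apply, h, ih]
  rw [← hk]; exact this k

/-- Last step of generation by fixed points. -/
theorem last_step {W : Type*} [Group W] [Finite W] {p : ℕ} (hp : p.Prime)
    {A : Type*} [CommGroup A] [Finite A] (hA : IsPGroup p A) (hnc : ¬ IsCyclic A)
    (φ : A →* MulAut W) (hW : ¬ p ∣ Nat.card W) (X : Subgroup W)
    (hX : ∀ a, ∀ x ∈ X, φ a x ∈ X) (hcomm : ∀ x y : W, x * y * x⁻¹ * y⁻¹ ∈ X)
    (hfix : ∀ a, a ≠ 1 → ∀ w, φ a w = w → w ∈ X) : X = ⊤ := by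
  obtain ⟨a, b, hap, hbp, hb, hab⟩ := exists_rank_two hp hA hnc
  have : X.Normal := ⟨fun n hn g => by
    have := X.mul_mem (hcomm g n) hn
    simpa using this⟩
  have hXle : Nat.card X ∣ Nat.card W := X.card_subgroup_dvd_card
  have hcop : ¬ p ∣ Nat.card X := fun h => hW (h.trans hXle)
  let _ : CommGroup (W ⧸ X) := { (inferInstance : Group (W ⧸ X)) with
    mul_comm := by
      intro x y
      induction x using QuotientGroup.induction_on with | H x => ?_
      induction y using QuotientGroup.induction_on with | H y => ?_
      rw [← QuotientGroup.mk_mul, ← QuotientGroup.mk_mul]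
      refine (QuotientGroup.eq).2 ?_
      have := hcomm y⁻¹ x⁻¹
      simpa [mul_assoc] using this }
  -- the induced endomorphisms
  let ψ : A → (W ⧸ X) →* (W ⧸ X) := fun c => QuotientGroup.map X X (φ c).toMonoidHom
    (fun x hx => hX c x hx)
  have hψ : ∀ c (w : W), ψ c (w : W ⧸ X) = ((φ c w : W) : W ⧸ X) := fun c w => rfl
  have hψmul : ∀ c d v, ψ (c * d) v = ψ c (ψ d v) := by
    intro c d v
    induction v using QuotientGroup.induction_on with | H v => ?_
    rw [hψ, hψ, hψ, map_mul]; rfl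
  have hψone : ∀ v, ψ 1 v = v := by
    intro v
    induction v using QuotientGroup.induction_on with | H v => ?_
    rw [hψ, map_one]; rfl
  have hfree : ∀ c, c ≠ 1 → ∀ v, ψ c v = v → v = 1 := by
    intro c hc v hv
    induction v using QuotientGroup.induction_on with | H v => ?_
    rw [hψ] at hv
    have h1 : v⁻¹ * φ c v ∈ X := QuotientGroup.eq.1 hv.symm
    obtain ⟨n, hn⟩ := hA c
    obtain ⟨w, hw, hvw⟩ := fixed_in_coset hp X (φ c) (n := n) (by rw [← map_pow, hn, map_one])
      (hX c) hcop v h1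
    have h2 := hfix c hc w hw
    rw [QuotientGroup.eq_one_iff]
    have := X.mul_mem h2 (X.inv_mem hvw)
    simpa using this
  -- norms are trivial
  have hnorm : ∀ c : A, c ≠ 1 → c ^ p = 1 → ∀ v, ∏ j ∈ Finset.range p, ψ (c ^ j) v = 1 := by
    intro c hc hcp v
    apply hfree c hc
    rw [map_prod]
    have h1 : ∀ j ∈ Finset.range p, ψ c (ψ (c ^ j) v) = ψ (c ^ (j + 1)) v := by
      intro j _; rw [← hψmul, pow_succ']
    rw [Finset.prod_congr rfl h1]
    have h2 := Finset.prod_range_succ (fun j => ψ (c ^ j) v) p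
    have h3 := Finset.prod_range_succ' (fun j => ψ (c ^ j) v) p
    rw [h2, hcp, pow_zero] at h3
    exact (mul_right_cancel h3).symm
  rw [eq_top_iff]
  intro w _
  have key : ∏ j ∈ Finset.range p, ∏ i ∈ Finset.range p, ψ ((a * b ^ i) ^ j) (w : W ⧸ X) = 1 := by
    rw [Finset.prod_comm]
    apply Finset.prod_eq_one
    intro i _
    apply hnorm
    · intro h
      apply hab
      rw [eq_inv_of_mul_eq_one_left h]
      exact Subgroup.inv_mem _ (Subgroup.pow_mem _ (Subgroup.mem_zpowers b) i)
    · rw [mul_pow, ← pow_mul, mul_comm i p, pow_mul, hbp, hap]; simp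
  rw [Finset.prod_eq_single_of_mem 0 (Finset.mem_range.2 hp.pos)] at key
  · simp only [pow_zero, hψone, Finset.prod_const, Finset.card_range] at key
    have h1 : orderOf (w : W ⧸ X) ∣ p := orderOf_dvd_of_pow_eq_one key
    rcases (Nat.dvd_prime hp).1 h1 with h | h
    · rw [orderOf_eq_one_iff] at h
      exact (QuotientGroup.eq_one_iff w).1 h
    · exfalso
      apply hW
      rw [← h]
      exact (orderOf_dvd_natCard _).trans (X.card_quotient_dvd_card)
  · intro j hj hj0
    have h1 : ∀ i ∈ Finset.range p, ψ ((a * b ^ i) ^ j) (w : W ⧸ X) =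
        ψ (a ^ j) (ψ ((b ^ j) ^ i) w) := by
      intro i _
      rw [← hψmul, mul_pow, ← pow_mul, ← pow_mul, mul_comm i j]
    rw [Finset.prod_congr rfl h1, ← map_prod, hnorm, map_one]
    · intro h
      have := Fact.mk hp
      have hob : orderOf b = p := orderOf_eq_prime hbp hb
      have := orderOf_dvd_of_pow_eq_one h
      rw [hob] at this
      have := Nat.le_of_dvd (Nat.pos_of_ne_zero hj0) this
      have := Finset.mem_range.1 hj
      omega
    · rw [← pow_mul, mul_comm, pow_mul, hbp, one_pow]

end
end ESA

namespace ESA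
section
open scoped commutatorElement

/-- The standing hypotheses (without the condition on involutions). -/
structure Setup (W : Type*) [Group W] (p : ℕ) (E : Subgroup (MulAut W)) : Prop where
  hW : IsPGroup 2 W
  hp : p.Prime
  hodd : Odd p
  hE : IsPGroup p E
  hEab : ∀ a ∈ E, ∀ b ∈ E, a * b = b * a
  hEnc : ¬ IsCyclic E

theorem Setup.nilp {W : Type*} [Group W] [Finite W] {p : ℕ} {E : Subgroup (MulAut W)}
    (S : Setup W p E) : Group.IsNilpotent W := by
  have := Fact.mk Nat.prime_two
  exact S.hW.isNilpotent

theorem Setup.fix2 {W : Type*} [Group W] {p : ℕ} {E : Subgroup (MulAut W)}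
    (S : Setup W p E) {e : MulAut W} (he : e ∈ E) {w : W} (h : e (e w) = w) : e w = w :=
  pow_fix (m := 2) S.hE he (by
    rw [Nat.coprime_two_left]; exact S.hodd) (by rw [pow_two]; exact h)

theorem Inv.inv_mem {W : Type*} [Group W] {E : Subgroup (MulAut W)} {Y : Subgroup W}
    (hY : Inv E Y) {e : MulAut W} (he : e ∈ E) {w : W} : e w ∈ Y ↔ w ∈ Y := by
  refine ⟨fun h => ?_, hY e he w⟩
  have := hY e⁻¹ (E.inv_mem he) _ h
  simpa using this

theorem Inv.inf {W : Type*} [Group W] {E : Subgroup (MulAut W)} {Y Z : Subgroup W}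
    (hY : Inv E Y) (hZ : Inv E Z) : Inv E (Y ⊓ Z) :=
  fun e he y hy => ⟨hY e he y hy.1, hZ e he y hy.2⟩

theorem Inv.top {W : Type*} [Group W] {E : Subgroup (MulAut W)} : Inv E (⊤ : Subgroup W) :=
  fun _ _ _ _ => Subgroup.mem_top _

theorem Inv.normalizer {W : Type*} [Group W] {E : Subgroup (MulAut W)} {Y : Subgroup W}
    (hY : Inv E Y) : Inv E (Subgroup.normalizer (Y : Set W)) := by
  intro e he n hn
  rw [Subgroup.mem_normalizer_iff] at hn ⊢
  intro x
  have h1 : ∀ x, e (e⁻¹ x) = x := fun x => by simp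
  rw [← hY.inv_mem (E.inv_mem he), hn, ← hY.inv_mem he]
  simp

theorem Inv.closure {W : Type*} [Group W] {E : Subgroup (MulAut W)} {F : Set W}
    (hF : ∀ e ∈ E, ∀ y ∈ F, e y ∈ F) : Inv E (Subgroup.closure F) := by
  intro e he
  have : Subgroup.closure F ≤ (Subgroup.closure F).comap e.toMonoidHom := by
    rw [Subgroup.closure_le]
    intro y hy
    exact Subgroup.subset_closure (hF e he y hy)
  exact fun y hy => this hy

theorem Inv.commutator {W : Type*} [Group W] {E : Subgroup (MulAut W)} {Y : Subgroup W}
    (hY : Inv E Y) : Inv E ⁅Y, Y⁆ := by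
  intro e he
  have : ⁅Y, Y⁆ ≤ (⁅Y, Y⁆).comap e.toMonoidHom := by
    rw [Subgroup.commutator_le]
    intro x hx y hy
    change e ⁅x, y⁆ ∈ ⁅Y, Y⁆
    rw [map_commutatorElement]
    exact Subgroup.commutator_mem_commutator (hY e he x hx) (hY e he y hy)
  exact fun y hy => this hy

theorem Inv.centralizer {W : Type*} [Group W] {E : Subgroup (MulAut W)} {Y : Subgroup W}
    (hY : Inv E Y) : Inv E (Subgroup.centralizer (Y : Set W)) := by
  intro e he n hn
  rw [Subgroup.mem_centralizer_iff] at hn ⊢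
  intro y hy
  have h1 := hn (e⁻¹ y) (hY _ (E.inv_mem he) _ hy)
  have := congrArg e h1
  simpa using this

/-- Normalizers grow, inside a subgroup. -/
theorem exists_normalizing {W : Type*} [Group W] [Group.IsNilpotent W] {X Y : Subgroup W}
    (h : X < Y) : ∃ n ∈ Y, n ∉ X ∧ n ∈ Subgroup.normalizer (X : Set W) := by
  have hlt : X.subgroupOf Y < ⊤ := by
    rw [lt_top_iff_ne_top, Ne, Subgroup.subgroupOf_eq_top]
    exact not_le_of_gt h
  have h1 := Group.normalizerCondition_of_isNilpotent (G := Y) _ hlt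
  obtain ⟨n, hn, hn'⟩ := SetLike.exists_of_lt h1
  refine ⟨n.1, n.2, fun h => hn' (Subgroup.mem_subgroupOf.2 h), ?_⟩
  rw [Subgroup.mem_normalizer_iff] at hn ⊢
  intro x
  constructor
  · intro hx
    have := (hn ⟨x, h.le hx⟩).1 (Subgroup.mem_subgroupOf.2 hx)
    exact Subgroup.mem_subgroupOf.1 this
  · intro hx
    have hxY : x ∈ Y := by
      have := Y.mul_mem (Y.mul_mem (Y.inv_mem n.2) (h.le hx)) n.2
      simpa [mul_assoc] using this
    exact Subgroup.mem_subgroupOf.1 ((hn ⟨x, hxY⟩).2 (Subgroup.mem_subgroupOf.2 hx))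

/-- A normal subgroup not inside `K` has an element outside `K` that is central modulo `K`. -/
theorem exists_central_mod {W : Type*} [Group W] [Group.IsNilpotent W] {N R K : Subgroup W}
    (hRN : R ≤ N) (hnorm : ∀ n ∈ N, ∀ r ∈ R, n * r * n⁻¹ ∈ R) (hRK : ¬ R ≤ K) :
    ∃ r ∈ R, r ∉ K ∧ ∀ n ∈ N, r * n * r⁻¹ * n⁻¹ ∈ K := by
  classical
  obtain ⟨c, hc⟩ := (Subgroup.isNilpotent_iff_lowerCentralSeries N).1 inferInstance
  have hex : ∃ i, R ⊓ N.lowerCentralSeries i ≤ K := ⟨c, by rw [hc]; simp⟩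
  have h0 : Nat.find hex ≠ 0 := by
    intro h
    have := Nat.find_spec hex
    rw [h, Subgroup.lowerCentralSeries_zero, inf_eq_left.2 hRN] at this
    exact hRK this
  obtain ⟨j, hj⟩ := Nat.exists_eq_succ_of_ne_zero h0
  have h1 := Nat.find_min hex (m := j) (by omega)
  obtain ⟨r, hr, hrK⟩ := SetLike.not_le_iff_exists.1 h1
  refine ⟨r, hr.1, hrK, fun n hn => ?_⟩
  have h2 := Nat.find_spec hex
  rw [hj, Nat.succ_eq_add_one, Subgroup.lowerCentralSeries_succ] at h2
  apply h2
  refine ⟨?_, Subgroup.commutator_mem_commutator hr.2 hn⟩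
  have := R.mul_mem hr.1 (hnorm n hn _ (R.inv_mem hr.1))
  simpa [mul_assoc] using this

/-- Restriction of automorphisms to an invariant subgroup. -/
def restr {W : Type*} [Group W] {E : Subgroup (MulAut W)} {Y : Subgroup W}
    (hY : Inv E Y) : E →* MulAut Y where
  toFun e :=
    { toFun := fun y => ⟨e.1 y.1, hY e.1 e.2 y.1 y.2⟩
      invFun := fun y => ⟨e.1⁻¹ y.1, hY _ (E.inv_mem e.2) y.1 y.2⟩
      left_inv := fun y => by simp
      right_inv := fun y => by simp
      map_mul' := fun x y => by apply Subtype.ext; simp }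
  map_one' := by ext y; rfl
  map_mul' := fun a b => by ext y; rfl

/-- Generation by fixed points. -/
theorem Setup.gen {W : Type*} [Group W] [Finite W] {p : ℕ} {E : Subgroup (MulAut W)}
    (S : Setup W p E) (Y : Subgroup W) (hY : Inv E Y) (T : Subgroup W)
    (hT : ∀ e ∈ E, e ≠ 1 → ∀ w ∈ Y, e w = w → w ∈ T) : Y ≤ T := by
  have := S.nilp
  induction hn : Nat.card Y using Nat.strong_induction_on generalizing Y T with
  | _ n ih =>
  subst hn
  set F : Set W := {w | w ∈ Y ∧ ∃ e ∈ E, e ≠ 1 ∧ e w = w} with hF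
  set X := Subgroup.closure F with hX
  have hXT : X ≤ T := by
    rw [hX, Subgroup.closure_le]
    rintro w ⟨hw, e, he, he1, hew⟩
    exact hT e he he1 w hw hew
  have hXY : X ≤ Y := by
    rw [hX, Subgroup.closure_le]
    rintro w ⟨hw, -⟩
    exact hw
  have hXinv : Inv E X := by
    apply Inv.closure
    rintro e he w ⟨hw, f, hf, hf1, hfw⟩
    refine ⟨hY e he w hw, f, hf, hf1, ?_⟩
    have := congrArg (fun g : MulAut W => g w) (S.hEab f hf e he)
    simp only [MulAut.mul_apply, hfw] at this
    exact this
  have hsub : ∀ Z : Subgroup W, Inv E Z → Z < Y → Z ≤ X := by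
    intro Z hZ hlt
    refine ih (Nat.card Z) ?_ Z hZ X ?_ rfl
    · exact Set.Finite.card_lt_card (Set.toFinite _) hlt
    · intro e he he1 w hw hew
      exact Subgroup.subset_closure ⟨hlt.le hw, e, he, he1, hew⟩
  refine le_trans ?_ hXT
  by_contra hcon
  have hlt : X < Y := lt_of_le_not_ge hXY hcon
  have hYbot : Y ≠ ⊥ := by
    rintro rfl
    exact not_lt_bot hlt
  obtain ⟨n, hnY, hnX, hnN⟩ := exists_normalizing hlt
  have hYN : Y ≤ Subgroup.normalizer (X : Set W) := by
    by_contra h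
    have h1 : Y ⊓ Subgroup.normalizer (X : Set W) < Y := inf_lt_left.2 h
    exact hnX (hsub _ (hY.inf hXinv.normalizer) h1 ⟨hnY, hnN⟩)
  have hcomm : ⁅Y, Y⁆ ≤ X := hsub _ hY.commutator (Group.IsSolvable.commutator_lt_of_ne_bot hYbot)
  let _ : CommGroup E := { (inferInstance : Group E) with
    mul_comm := fun a b => Subtype.ext (S.hEab a.1 a.2 b.1 b.2) }
  have hcop : ¬ p ∣ Nat.card Y := by
    have := Fact.mk Nat.prime_two
    obtain ⟨k, hk⟩ := IsPGroup.iff_card.1 (S.hW.to_subgroup Y)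
    rw [hk]
    intro h
    have h2 := (Nat.prime_dvd_prime_iff_eq S.hp Nat.prime_two).1 (S.hp.dvd_of_dvd_pow h)
    have := S.hodd
    rw [h2] at this
    exact absurd this (by decide)
  have key := last_step S.hp S.hE S.hEnc (restr hY) hcop (X.subgroupOf Y)
    (fun a x hx => Subgroup.mem_subgroupOf.2
      (hXinv a.1 a.2 _ (Subgroup.mem_subgroupOf.1 hx)))
    (fun x y => Subgroup.mem_subgroupOf.2
      (hcomm (Subgroup.commutator_mem_commutator x.2 y.2)))
    (fun a ha w hw => Subgroup.mem_subgroupOf.2 (Subgroup.subset_closure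
      ⟨w.2, a.1, a.2, fun h => ha (Subtype.ext h), congrArg Subtype.val hw⟩))
  rw [Subgroup.subgroupOf_eq_top] at key
  exact hcon key

end
end ESA

namespace ESA
section

theorem Setup.stage1 {W : Type*} [Group W] [Finite W] {p : ℕ} {E : Subgroup (MulAut W)}
    (S : Setup W p E) (R : Subgroup W) (hR : Inv E R) (hnt : ∃ e ∈ E, ∃ x ∈ R, e x ≠ x)
    (hmin : ∀ Z : Subgroup W, Z < R → Inv E Z → ∀ e ∈ E, ∀ z ∈ Z, e z = z)
    (huniq : ∀ a ∈ R, ∀ b ∈ R, orderOf a = 2 → orderOf b = 2 → a = b) :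
    ∃ z ∈ R, z ≠ 1 ∧ z * z = 1 ∧ (∀ r ∈ R, z * r = r * z) ∧ (∀ e ∈ E, e z = z) ∧
      (∀ r ∈ R, r * r = 1 → r = 1 ∨ r = z) ∧ (∀ r ∈ R, r * r = 1 ∨ r * r = z) ∧
      (∀ x ∈ R, ∀ y ∈ R, x * y = y * x ∨ x * y = z * (y * x)) := by
  have h2p := Fact.mk Nat.prime_two
  set M := Subgroup.closure {m | ∃ x ∈ R, ∃ e ∈ E, m = x⁻¹ * e x} with hM
  have hMR : M ≤ R := by
    rw [hM, Subgroup.closure_le]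
    rintro m ⟨x, hx, e, he, rfl⟩
    exact R.mul_mem (R.inv_mem hx) (hR e he x hx)
  have hMinv : Inv E M := by
    apply Inv.closure
    rintro f hf m ⟨x, hx, e, he, rfl⟩
    refine ⟨f x, hR f hf x hx, e, he, ?_⟩
    have := congrArg (fun g : MulAut W => g x) (S.hEab f hf e he)
    simp only [MulAut.mul_apply] at this
    rw [map_mul, map_inv, this]
  have hMeq : M = R := by
    by_contra hne
    have hlt : M < R := lt_of_le_of_ne hMR hne
    obtain ⟨e, he, x, hx, hex⟩ := hnt
    have hc : e (x⁻¹ * e x) = x⁻¹ * e x :=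
      hmin M hlt hMinv e he _ (Subgroup.subset_closure ⟨x, hx, e, he, rfl⟩)
    set c := x⁻¹ * e x with hcdef
    have hxc : e x = x * c := by simp [hcdef]
    have hk : ∀ k : ℕ, (e ^ k) x = x * c ^ k := by
      intro k
      induction k with
      | zero => simp
      | succ k ih => rw [pow_succ', MulAut.mul_apply, ih, map_mul, map_pow, hc, hxc, mul_assoc,
          ← pow_succ']
    obtain ⟨n, hn⟩ := S.hE ⟨e, he⟩
    have hn' : e ^ p ^ n = 1 := congrArg Subtype.val hn
    have h1 := hk (p ^ n)
    rw [hn', MulAut.one_apply] at h1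
    have h2 : c ^ p ^ n = 1 := by
      have := h1.symm
      rwa [mul_eq_left] at this
    obtain ⟨m, hm⟩ := S.hW c
    have h3 : orderOf c ∣ 1 := by
      have : (p ^ n).Coprime (2 ^ m) :=
        Nat.Coprime.pow _ _ ((Nat.coprime_two_right).2 S.hodd)
      rw [← this]
      exact Nat.dvd_gcd (orderOf_dvd_of_pow_eq_one h2) (orderOf_dvd_of_pow_eq_one hm)
    have h4 : c = 1 := orderOf_eq_one_iff.1 (Nat.dvd_one.1 h3)
    apply hex
    rw [hxc, h4, mul_one]
  have hcentral : ∀ D : Subgroup W, D < R → Inv E D → (∀ r ∈ R, ∀ d ∈ D, r * d * r⁻¹ ∈ D) →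
      ∀ d ∈ D, ∀ r ∈ R, d * r = r * d := by
    intro D hD hDinv hDn d hd
    have : M ≤ Subgroup.centralizer {d} := by
      rw [hM, Subgroup.closure_le]
      rintro m ⟨x, hx, e, he, rfl⟩
      rw [SetLike.mem_coe, Subgroup.mem_centralizer_singleton_iff]
      have h1 := hmin D hD hDinv e he _ (hDn x hx d hd)
      rw [map_mul, map_mul, map_inv, hmin D hD hDinv e he d hd] at h1
      calc x⁻¹ * e x * d = x⁻¹ * (e x * d * (e x)⁻¹) * e x := by group
        _ = x⁻¹ * (x * d * x⁻¹) * e x := by rw [h1]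
        _ = d * (x⁻¹ * e x) := by group
    intro r hr
    rw [← hMeq] at hr
    exact (Subgroup.mem_centralizer_singleton_iff.1 (this hr)).symm
  set D := Subgroup.closure {m | ∃ x ∈ R, m = x * x} with hD
  have hDR : D ≤ R := by
    rw [hD, Subgroup.closure_le]
    rintro m ⟨x, hx, rfl⟩
    exact R.mul_mem hx hx
  have hRbot : R ≠ ⊥ := by
    rintro rfl
    obtain ⟨e, he, x, hx, hex⟩ := hnt
    rw [Subgroup.mem_bot] at hx
    exact hex (by rw [hx, map_one])
  obtain ⟨k, hk⟩ := IsPGroup.iff_card.1 (S.hW.to_subgroup R)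
  have hk0 : k ≠ 0 := by
    rintro rfl
    rw [pow_zero, Subgroup.card_eq_one] at hk
    exact hRbot hk
  have hDne : D ≠ R := by
    intro hDe
    obtain ⟨j, hj⟩ := Nat.exists_eq_succ_of_ne_zero hk0
    rw [hj] at hk
    obtain ⟨K, hK⟩ := Sylow.exists_subgroup_card_pow_prime (G := R) 2 (n := j)
      (hk ▸ pow_dvd_pow 2 (Nat.le_succ j))
    have hKi : K.index = 2 := by
      have := K.card_mul_index
      rw [hK, hk, pow_succ] at this
      exact Nat.eq_of_mul_eq_mul_left (pow_pos (by norm_num) j) this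
    have h1 : D ≤ K.map R.subtype := by
      rw [hD, Subgroup.closure_le]
      rintro m ⟨x, hx, rfl⟩
      have := Subgroup.sq_mem_of_index_two hKi ⟨x, hx⟩
      exact ⟨_, this, by simp [pow_two]⟩
    have h2 : R ≤ K.map R.subtype := le_trans hDe.ge h1
    have h3 := Subgroup.card_le_of_le h2
    rw [Subgroup.card_map_of_injective R.subtype_injective, hK, hk] at h3
    have := Nat.pow_lt_pow_right (a := 2) (by norm_num) (Nat.lt_succ_self j)
    omega
  have hDlt : D < R := lt_of_le_of_ne hDR hDne
  have hDinv : Inv E D := by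
    apply Inv.closure
    rintro f hf m ⟨x, hx, rfl⟩
    exact ⟨f x, hR f hf x hx, map_mul _ _ _⟩
  have hDn : ∀ r ∈ R, ∀ d ∈ D, r * d * r⁻¹ ∈ D := by
    intro r hr
    have : D ≤ D.comap (MulAut.conj r).toMonoidHom := by
      refine (Subgroup.closure_le _).2 ?_
      rintro m ⟨x, hx, rfl⟩
      refine Subgroup.subset_closure ⟨r * x * r⁻¹, R.mul_mem (R.mul_mem hr hx) (R.inv_mem hr), ?_⟩
      simp [mul_assoc]
    intro d hd
    exact this hd
  have hcen := hcentral D hDlt hDinv hDn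
  have hsqD : ∀ x ∈ R, x * x ∈ D := fun x hx => Subgroup.subset_closure ⟨x, hx, rfl⟩
  -- the involution
  obtain ⟨z', hz'⟩ := exists_prime_orderOf_dvd_card' (G := R) 2 (hk ▸ dvd_pow_self 2 hk0)
  obtain ⟨z, hzR⟩ := z'
  have hz : orderOf z = 2 := by rw [← hz', Subgroup.orderOf_mk]
  have hz1 : z ≠ 1 := by
    rintro rfl
    simp at hz
  have hzz : z * z = 1 := by rw [← pow_two, ← hz, pow_orderOf_eq_one]
  have huz : ∀ r ∈ R, r * r = 1 → r = 1 ∨ r = z := by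
    intro r hr hrr
    by_cases h : r = 1
    · exact Or.inl h
    · exact Or.inr (huniq r hr z hzR (orderOf_eq_prime (by rw [pow_two, hrr]) h) hz)
  have hzc : ∀ r ∈ R, z * r = r * z := by
    intro r hr
    have h1 := huz (r * z * r⁻¹) (R.mul_mem (R.mul_mem hr hzR) (R.inv_mem hr)) (by
      calc r * z * r⁻¹ * (r * z * r⁻¹) = r * (z * z) * r⁻¹ := by group
        _ = 1 := by rw [hzz]; group)
    rcases h1 with h1 | h1
    · exfalso
      apply hz1
      have : z = r⁻¹ * (r * z * r⁻¹) * r := by group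
      rw [this, h1]; group
    · conv_lhs => rw [← h1]
      group
  have hcom : ∀ x ∈ R, ∀ y ∈ R, x * y = y * x ∨ x * y = z * (y * x) := by
    intro x hx y hy
    have hcD : x * y * x⁻¹ * y⁻¹ ∈ D := by
      have h1 := D.mul_mem (D.mul_mem (hsqD x hx) (hsqD (x⁻¹ * y) (R.mul_mem (R.inv_mem hx) hy)))
        (D.inv_mem (hsqD y hy))
      have h2 : x * x * (x⁻¹ * y * (x⁻¹ * y)) * (y * y)⁻¹ = x * y * x⁻¹ * y⁻¹ := by group
      rwa [h2] at h1
    have h3 : (x * y * x⁻¹ * y⁻¹) * (x * y * x⁻¹ * y⁻¹) = 1 := by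
      have h4 := hcen _ hcD x hx
      have h5 := hcen _ (hsqD x hx) y hy
      calc (x * y * x⁻¹ * y⁻¹) * (x * y * x⁻¹ * y⁻¹)
          = ((x * y * x⁻¹ * y⁻¹) * x) * y * x⁻¹ * y⁻¹ := by group
        _ = (x * (x * y * x⁻¹ * y⁻¹)) * y * x⁻¹ * y⁻¹ := by rw [h4]
        _ = (x * x * y) * x⁻¹ * x⁻¹ * y⁻¹ := by group
        _ = (y * (x * x)) * x⁻¹ * x⁻¹ * y⁻¹ := by rw [h5]
        _ = 1 := by group
    have h6 : x * y = (x * y * x⁻¹ * y⁻¹) * (y * x) := by group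
    rcases huz _ (hDR hcD) h3 with h | h
    · left; rw [h, one_mul] at h6; exact h6
    · right; rw [h] at h6; exact h6
  let U : Subgroup W :=
    { carrier := {x | x ∈ R ∧ (x * x = 1 ∨ x * x = z)}
      one_mem' := ⟨R.one_mem, Or.inl (one_mul 1)⟩
      mul_mem' := by
        rintro a b ⟨ha, ha'⟩ ⟨hb, hb'⟩
        refine ⟨R.mul_mem ha hb, ?_⟩
        have hza := hzc a ha
        rcases hcom b hb a ha with h | h
        · have h1 : a * b * (a * b) = (a * a) * (b * b) := by
            calc a * b * (a * b) = a * (b * a) * b := by group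
              _ = _ := by rw [h]; group
          rw [h1]
          rcases ha' with ha' | ha' <;> rcases hb' with hb' | hb' <;> rw [ha', hb'] <;> simp [hzz]
        · have h1 : a * b * (a * b) = z * ((a * a) * (b * b)) := by
            calc a * b * (a * b) = a * (b * a) * b := by group
              _ = (a * z) * (a * b) * b := by rw [h]; group
              _ = _ := by rw [← hza]; group
          rw [h1]
          rcases ha' with ha' | ha' <;> rcases hb' with hb' | hb' <;> rw [ha', hb'] <;> simp [hzz]
      inv_mem' := by
        rintro a ⟨ha, ha'⟩
        refine ⟨R.inv_mem ha, ?_⟩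
        have hzi : z⁻¹ = z := inv_eq_of_mul_eq_one_left hzz
        rw [← mul_inv_rev]
        rcases ha' with ha' | ha' <;> rw [ha'] <;> simp [hzi] }
  have hMU : M ≤ U := by
    rw [hM, Subgroup.closure_le]
    rintro m ⟨x, hx, e, he, rfl⟩
    have hy := hR e he x hx
    refine ⟨R.mul_mem (R.inv_mem hx) hy, ?_⟩
    have h1 : e x * e x = x * x := by
      have := hmin D hDlt hDinv e he _ (hsqD x hx)
      rwa [map_mul] at this
    set y := e x
    rcases hcom x hx y hy with h | h
    · left
      calc x⁻¹ * y * (x⁻¹ * y) = x⁻¹ * x⁻¹ * (x * y) * (x⁻¹ * y) := by group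
        _ = x⁻¹ * x⁻¹ * (y * y) := by rw [h]; group
        _ = 1 := by rw [h1]; group
    · right
      calc x⁻¹ * y * (x⁻¹ * y) = x⁻¹ * x⁻¹ * (x * y) * (x⁻¹ * y) := by group
        _ = x⁻¹ * (x⁻¹ * z) * (y * y) := by rw [h]; group
        _ = z * x⁻¹ * x⁻¹ * (y * y) := by
            rw [← hzc _ (R.inv_mem hx), ← mul_assoc x⁻¹ z, ← hzc _ (R.inv_mem hx)]
        _ = z := by rw [h1]; group
  refine ⟨z, hzR, hz1, hzz, hzc, ?_, huz, fun r hr => (hMU (hMeq ▸ hr)).2, hcom⟩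
  intro e he
  apply huniq _ (hR e he z hzR) z hzR _ hz
  rw [← hz]
  exact MulEquiv.orderOf_eq e z

end
end ESA

namespace ESA
section

/-- `R` is a quaternion group of order 8 with central involution `z`, on which `E` acts
nontrivially. -/
structure QP {W : Type*} [Group W] (E : Subgroup (MulAut W)) (z : W) (R : Subgroup W) : Prop where
  inv : Inv E R
  card : Nat.card R = 8
  zmem : z ∈ R
  zne : z ≠ 1
  zsq : z * z = 1
  zcomm : ∀ r ∈ R, z * r = r * z
  zfix : ∀ e ∈ E, e z = z
  fixed : ∀ r ∈ R, (∀ e ∈ E, e r = r) → r = 1 ∨ r = z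
  min : ∀ S : Subgroup W, S ≤ R → Inv E S → (∀ s ∈ S, s = 1 ∨ s = z) ∨ S = R
  sq : ∀ r ∈ R, r ≠ 1 → r ≠ z → r * r = z
  absorb : ∀ w, (∀ r ∈ R, w * r = r * w ∨ w * r = z * (r * w)) →
    ∃ r ∈ R, ∀ s ∈ R, (r * w) * s = s * (r * w)
  nc : ∃ x ∈ R, ∃ y ∈ R, x ≠ 1 ∧ x ≠ z ∧ y ≠ 1 ∧ y ≠ z ∧ y ≠ x ∧ y ≠ z * x ∧ x * y = z * (y * x)
  nt : ∃ e ∈ E, ∃ x ∈ R, e x ≠ x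
  cyc : ∀ f ∈ E, ∀ g ∈ E, (∃ x ∈ R, f x ≠ x) →
    ∃ i : ℕ, i < 3 ∧ ∀ r ∈ R, (g * f ^ i) r = r

theorem Setup.stage2 {W : Type*} [Group W] {p : ℕ} {E : Subgroup (MulAut W)}
    (S : Setup W p E) (R : Subgroup W) (hR : Inv E R) (z : W) (hz : z ∈ R) (hz1 : z ≠ 1)
    (hzz : z * z = 1) (hzc : ∀ r ∈ R, z * r = r * z) (hzf : ∀ e ∈ E, e z = z)
    (hu : ∀ r ∈ R, r * r = 1 → r = 1 ∨ r = z) (hsq : ∀ r ∈ R, r * r = 1 ∨ r * r = z)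
    (hcom : ∀ x ∈ R, ∀ y ∈ R, x * y = y * x ∨ x * y = z * (y * x))
    (e : MulAut W) (he : e ∈ E) (x : W) (hx : x ∈ R) (hex : e x ≠ x) :
    x ≠ 1 ∧ x ≠ z ∧ e x ≠ 1 ∧ e x ≠ z ∧ e x ≠ z * x ∧ x * e x = z * (e x * x) ∧
    (∀ w ∈ R, (w = 1 ∨ w = z) ∨ (w = x ∨ w = z * x) ∨ (w = e x ∨ w = z * e x) ∨
      (w = x * e x ∨ w = z * (x * e x))) ∧
    (e (e x) = x * e x ∨ e (e x) = z * (x * e x)) ∧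
    e x * (x * e x) = x := by
  have hy : e x ∈ R := hR e he x hx
  have hzz' : ∀ w, z * (z * w) = w := fun w => by rw [← mul_assoc, hzz, one_mul]
  have hx1 : x ≠ 1 := by rintro rfl; exact hex (map_one e)
  have hxz : x ≠ z := by rintro rfl; exact hex (hzf e he)
  have hy1 : e x ≠ 1 := fun h => hx1 (by simpa using h)
  have hyz : e x ≠ z := fun h => hxz (e.injective (h.trans (hzf e he).symm))
  have hyzx : e x ≠ z * x := by
    intro h
    apply hex
    apply S.fix2 he
    rw [h, map_mul, hzf e he, h, hzz']
  have hsq' : ∀ r ∈ R, r ≠ 1 → r ≠ z → r * r = z := by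
    intro r hr h1 h2
    rcases hsq r hr with h | h
    · rcases hu r hr h with h | h
      · exact absurd h h1
      · exact absurd h h2
    · exact h
  have hinv : ∀ r ∈ R, r ≠ 1 → r ≠ z → r⁻¹ = z * r := by
    intro r hr h1 h2
    apply inv_eq_of_mul_eq_one_left
    rw [mul_assoc, hsq' r hr h1 h2, hzz]
  have hcent : ∀ r ∈ R, ∀ s ∈ R, r * s = s * r → r ≠ 1 → r ≠ z →
      (s = 1 ∨ s = z) ∨ (s = r ∨ s = z * r) := by
    intro r hr s hs hrs h1 h2
    by_cases hs1 : s = 1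
    · exact Or.inl (Or.inl hs1)
    by_cases hs2 : s = z
    · exact Or.inl (Or.inr hs2)
    right
    have h3 : (s * r) * (s * r) = 1 := by
      calc (s * r) * (s * r) = s * (r * s) * r := by group
        _ = (s * s) * (r * r) := by rw [hrs]; group
        _ = 1 := by rw [hsq' r hr h1 h2, hsq' s hs hs1 hs2, hzz]
    rcases hu _ (R.mul_mem hs hr) h3 with h | h
    · right
      rw [← hinv r hr h1 h2]
      exact eq_inv_of_mul_eq_one_left h
    · left
      rw [eq_mul_inv_of_mul_eq h, hinv r hr h1 h2, hzz']
  have hanti : x * e x = z * (e x * x) := by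
    rcases hcom x hx _ hy with h | h
    · exfalso
      rcases hcent x hx _ hy h hx1 hxz with (h | h) | (h | h)
      · exact hy1 h
      · exact hyz h
      · exact hex h
      · exact hyzx h
    · exact h
  have hanti' : e x * x = z * (x * e x) := by rw [hanti, hzz']
  have hyy : e x * e x = z := hsq' _ hy hy1 hyz
  have hyxy : e x * (x * e x) = x := by
    rw [← mul_assoc, hanti', mul_assoc, mul_assoc, hyy, ← hzc x hx, hzz']
  have hcover : ∀ w ∈ R, (w = 1 ∨ w = z) ∨ (w = x ∨ w = z * x) ∨ (w = e x ∨ w = z * e x) ∨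
      (w = x * e x ∨ w = z * (x * e x)) := by
    intro w hw
    rcases hcom w hw x hx with h | h
    · rcases hcent x hx w hw h.symm hx1 hxz with h | h
      · exact Or.inl h
      · exact Or.inr (Or.inl h)
    · have h1 : x * (w * e x) = (w * e x) * x := by
        calc x * (w * e x) = z * (z * (x * w)) * e x := by rw [hzz']; group
          _ = z * w * (x * e x) := by rw [← h]; group
          _ = z * (w * z) * (e x * x) := by rw [hanti]; group
          _ = z * (z * (w * (e x * x))) := by rw [← hzc w hw]; group
          _ = _ := by rw [hzz']; group
      have h2 : ∀ v, w * e x = v → w = z * (v * e x) := by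
        intro v hv
        rw [← hv, mul_assoc, hyy, ← hzc w hw, hzz']
      rcases hcent x hx _ (R.mul_mem hw hy) h1 hx1 hxz with (h | h) | (h | h)
      · have := h2 _ h
        rw [one_mul] at this
        tauto
      · have := h2 _ h
        rw [hzz'] at this
        tauto
      · have := h2 _ h
        tauto
      · have := h2 _ h
        rw [mul_assoc, hzz'] at this
        tauto
  refine ⟨hx1, hxz, hy1, hyz, hyzx, hanti, hcover, ?_, hyxy⟩
  rcases hcover _ (hR e he _ hy) with (h | h) | (h | h) | (h | h) | h
  · exact absurd (by simpa using h) hx1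
  · exact absurd (e.injective (h.trans (hzf e he).symm)) hyz
  · exact absurd (S.fix2 he h) hex
  · exfalso
    apply hex
    apply pow_fix (m := 4) S.hE he
    · exact Nat.Coprime.pow_left 2 ((Nat.coprime_two_left).2 S.hodd)
    · have : (e ^ 4) x = e (e (e (e x))) := rfl
      rw [this, h, map_mul, map_mul, hzf e he, hzf e he, h, hzz']
  · exact absurd (e.injective h) hex
  · exfalso
    have h3 : e (e x) = e x := by
      apply S.fix2 he
      rw [h, map_mul, hzf e he, h, hzz']
    exact hex (e.injective h3)
  · exact h

theorem Setup.stage3 {W : Type*} [Group W] [Finite W] {p : ℕ} {E : Subgroup (MulAut W)}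
    (S : Setup W p E) (R : Subgroup W) (hR : Inv E R) (hnt : ∃ e ∈ E, ∃ x ∈ R, e x ≠ x)
    (hmin : ∀ Z : Subgroup W, Z < R → Inv E Z → ∀ e ∈ E, ∀ z ∈ Z, e z = z)
    (huniq : ∀ a ∈ R, ∀ b ∈ R, orderOf a = 2 → orderOf b = 2 → a = b) :
    ∃ z, QP E z R ∧ p = 3 := by
  classical
  obtain ⟨z, hz, hz1, hzz, hzc, hzf, hu, hsq, hcom⟩ := S.stage1 R hR hnt hmin huniq
  have H := S.stage2 R hR z hz hz1 hzz hzc hzf hu hsq hcom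
  have hzz' : ∀ w, z * (z * w) = w := fun w => by rw [← mul_assoc, hzz, one_mul]
  have hsq' : ∀ r ∈ R, r ≠ 1 → r ≠ z → r * r = z := by
    intro r hr h1 h2
    rcases hsq r hr with h | h
    · rcases hu r hr h with h | h
      · exact absurd h h1
      · exact absurd h h2
    · exact h
  have hnt' := hnt
  obtain ⟨e, he, x, hx, hex⟩ := hnt
  obtain ⟨hx1, hxz, hy1, hyz, hyzx, hanti, hcover, hey, hyxy⟩ := H e he x hx hex
  have hy : e x ∈ R := hR e he x hx
  have he3 : ∀ f ∈ E, ∀ x ∈ R, f x ≠ x → f (f (f x)) = x := by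
    intro f hf x hx hfx
    obtain ⟨-, -, -, -, -, -, -, h, h'⟩ := H f hf x hx hfx
    rcases h with h | h
    · rw [h, map_mul, h, h']
    · rw [h, map_mul, map_mul, hzf f hf, h, ← mul_assoc (f x) z, ← hzc _ (hR f hf x hx),
        mul_assoc, h', hzz']
  have hxy : ∀ f ∈ E, ∀ x ∈ R, f x ≠ x → f (x * f x) = x ∨ f (x * f x) = z * x := by
    intro f hf x hx hfx
    obtain ⟨-, -, -, -, -, -, -, h, -⟩ := H f hf x hx hfx
    rcases h with h | h
    · left; rw [← h, he3 f hf x hx hfx]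
    · right
      have h2 : x * f x = z * f (f x) := by rw [h, hzz']
      rw [h2, map_mul, hzf f hf, he3 f hf x hx hfx]
  have hfixed : ∀ r ∈ R, (∀ e ∈ E, e r = r) → r = 1 ∨ r = z := by
    intro r hr hfix
    by_contra! hcon
    have h1 := hfix e he
    have h2 := hxy e he x hx hex
    rcases hcover r hr with (h | h) | (h | h) | (h | h) | (h | h)
    · exact hcon.1 h
    · exact hcon.2 h
    · rw [h] at h1; exact hex h1
    · rw [h, map_mul, hzf e he] at h1
      exact hex (mul_left_cancel h1)
    · rw [h] at h1; exact hex (e.injective h1)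
    · rw [h, map_mul, hzf e he] at h1
      exact hex (e.injective (mul_left_cancel h1))
    · rw [h] at h1
      rcases h2 with h2 | h2
      · rw [h2] at h1
        exact hy1 (by simpa using h1.symm)
      · rw [h2, hzc x hx] at h1
        exact hyz (mul_left_cancel h1).symm
    · rw [h, map_mul, hzf e he] at h1
      have h1 := mul_left_cancel h1
      rcases h2 with h2 | h2
      · rw [h2] at h1
        exact hy1 (by simpa using h1.symm)
      · rw [h2, hzc x hx] at h1
        exact hyz (mul_left_cancel h1).symm
  refine ⟨z, ⟨hR, ?_, hz, hz1, hzz, hzc, hzf, hfixed, ?_, hsq', ?_, ?_, hnt', ?_⟩, ?_⟩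
  · have h2p := Fact.mk Nat.prime_two
    obtain ⟨k, hk⟩ := IsPGroup.iff_card.1 (S.hW.to_subgroup R)
    let F : Finset W := {1, z, x, z * x, e x, z * e x, x * e x, z * (x * e x)}
    let F' : Finset W := {1, z, x, z * x, e x}
    have hle : Nat.card R ≤ 8 := by
      have h1 : (R : Set W) ⊆ F := by
        intro w hw
        have := hcover w hw
        simp only [F, Finset.coe_insert, Finset.coe_singleton, Set.mem_insert_iff,
          Set.mem_singleton_iff]
        tauto
      have h2 := Set.ncard_le_ncard h1 (Finset.finite_toSet F)
      rw [Set.ncard_coe_finset] at h2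
      have h3 : F.card ≤ 6 + 1 + 1 := (Finset.card_insert_le _ _).trans
        (Nat.add_le_add_right ((Finset.card_insert_le _ _).trans
          (Nat.add_le_add_right Finset.card_le_six 1)) 1)
      exact h2.trans h3
    have hge : 5 ≤ Nat.card R := by
      have h1 : (F' : Set W) ⊆ R := by
        intro w hw
        simp only [F', Finset.coe_insert, Finset.coe_singleton, Set.mem_insert_iff,
          Set.mem_singleton_iff] at hw
        rcases hw with rfl | rfl | rfl | rfl | rfl
        · exact R.one_mem
        · exact hz
        · exact hx
        · exact R.mul_mem hz hx
        · exact hy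
      have h2 := Set.ncard_le_ncard h1 (Set.toFinite _)
      rw [Set.ncard_coe_finset] at h2
      have h3 : F'.card = 5 := by
        have a1 : z * x ≠ 1 := fun h => hxz (by
          have := hzz' x; rw [h, mul_one] at this; exact this.symm)
        have a2 : z ≠ z * x := fun h => hx1 (by simpa using h.symm)
        have a3 : x ≠ z * x := fun h => hz1 (by simpa using h.symm)
        simp only [F']
        rw [Finset.card_insert_of_notMem, Finset.card_insert_of_notMem,
          Finset.card_insert_of_notMem, Finset.card_insert_of_notMem, Finset.card_singleton]
        · simpa using hyzx.symm
        · simp only [Finset.mem_insert, Finset.mem_singleton, not_or]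
          exact ⟨a3, hex.symm⟩
        · simp only [Finset.mem_insert, Finset.mem_singleton, not_or]
          exact ⟨hxz.symm, a2, hyz.symm⟩
        · simp only [Finset.mem_insert, Finset.mem_singleton, not_or]
          exact ⟨hz1.symm, hx1.symm, a1.symm, hy1.symm⟩
      rw [h3] at h2
      exact h2
    rw [hk] at hle hge ⊢
    have hk3 : k = 3 := by
      have : k < 4 := by
        by_contra! h
        have := Nat.pow_le_pow_right (n := 2) (by norm_num) h
        omega
      interval_cases k <;> omega
    rw [hk3]; norm_num
  · intro T hT hTinv
    by_cases h : T = R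
    · exact Or.inr h
    · left
      intro s hs
      exact hfixed s (hT hs) (fun e he => hmin T (lt_of_le_of_ne hT h) hTinv e he s hs)
  · intro w hw
    have hwz : Commute w z := by
      rcases hw z hz with h | h
      · exact h
      · exfalso
        rw [hzz'] at h
        exact hz1 (by simpa using h)
    have hall : ∀ c : W, Commute c z → Commute c x → Commute c (e x) → ∀ s ∈ R, c * s = s * c := by
      intro c h1 h2 h3 s hs
      change Commute c s
      rcases hcover s hs with (h | h) | (h | h) | (h | h) | (h | h) <;> rw [h]
      · exact Commute.one_right c
      · exact h1
      · exact h2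
      · exact h1.mul_right h2
      · exact h3
      · exact h1.mul_right h3
      · exact h2.mul_right h3
      · exact h1.mul_right (h2.mul_right h3)
    have czx : Commute z x := hzc x hx
    have czy : Commute z (e x) := hzc _ hy
    set y := e x with hydef
    have hanti' : y * x = z * (x * y) := by rw [hanti, hzz']
    rcases hw x hx with h1 | h1 <;> rcases hw y hy with h2 | h2
    · refine ⟨1, R.one_mem, hall _ ?_ ?_ ?_⟩
      · rw [one_mul]; exact hwz
      · rw [one_mul]; exact h1
      · rw [one_mul]; exact h2
    · refine ⟨x, hx, hall _ (czx.symm.mul_left hwz) ((Commute.refl x).mul_left h1) ?_⟩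
      change x * w * y = y * (x * w)
      calc x * w * y = x * (w * y) := by group
        _ = (x * z) * (y * w) := by rw [h2]; group
        _ = z * (x * y) * w := by rw [← hzc x hx]; group
        _ = _ := by rw [hanti, hzz']; group
    · refine ⟨y, hy, hall _ (czy.symm.mul_left hwz) ?_ ((Commute.refl y).mul_left h2)⟩
      change y * w * x = x * (y * w)
      calc y * w * x = y * (w * x) := by group
        _ = (y * z) * (x * w) := by rw [h1]; group
        _ = z * (y * x) * w := by rw [← hzc y hy]; group
        _ = _ := by rw [← hanti]; group
    · refine ⟨x * y, R.mul_mem hx hy,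
        hall _ ((czx.symm.mul_left czy.symm).mul_left hwz) ?_ ?_⟩
      · change x * y * w * x = x * (x * y * w)
        calc x * y * w * x = x * (y * (w * x)) := by group
          _ = x * ((y * z) * (x * w)) := by rw [h1]; group
          _ = x * (z * (y * x) * w) := by rw [← hzc y hy]; group
          _ = _ := by rw [← hanti]
      · change x * y * w * y = y * (x * y * w)
        calc x * y * w * y = x * (y * (w * y)) := by group
          _ = x * ((y * z) * (y * w)) := by rw [h2]; group
          _ = (x * z) * (y * y * w) := by rw [← hzc y hy]; group
          _ = z * (x * y) * (y * w) := by rw [← hzc x hx]; group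
          _ = _ := by rw [← hanti']; group
  · exact ⟨x, hx, e x, hy, hx1, hxz, hy1, hyz, hex, hyzx, hanti⟩
  · rintro f hf g hg ⟨x, hx, hfx⟩
    obtain ⟨hx1, hxz, hy1, hyz, hyzx, hanti, hcover, hey, hyxy⟩ := H f hf x hx hfx
    have htriv : ∀ h ∈ E, (h x = x ∨ h x = z * x) → ∀ r ∈ R, h r = r := by
      intro h hh hhx
      have h1 : h x = x := by
        rcases hhx with h1 | h1
        · exact h1
        · apply S.fix2 hh
          rw [h1, map_mul, hzf h hh, h1, hzz']
      have h2 : h (f x) = f x := by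
        have := congrArg (fun g : MulAut W => g x) (S.hEab h hh f hf)
        simp only [MulAut.mul_apply] at this
        rw [this, h1]
      have h3 := hzf h hh
      intro r hr
      rcases hcover r hr with (h | h) | (h | h) | (h | h) | (h | h) <;> rw [h] <;>
        simp only [map_mul, map_one, h1, h2, h3]
    have hgf : ∀ v, g (f v) = f (g v) := by
      intro v
      have := congrArg (fun g : MulAut W => g v) (S.hEab g hg f hf)
      simpa only [MulAut.mul_apply] using this
    have hfz := hzf f hf
    have hf3 := he3 f hf x hx hfx
    rcases hcover (g x) (hR g hg x hx) with (h | h) | (h | h) | (h | h) | (h | h)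
    · exact absurd (by simpa using h) hx1
    · exact absurd (g.injective (h.trans (hzf g hg).symm)) hxz
    · exact ⟨0, by norm_num, htriv _ (E.mul_mem hg (E.pow_mem hf 0)) (Or.inl (by simpa using h))⟩
    · exact ⟨0, by norm_num, htriv _ (E.mul_mem hg (E.pow_mem hf 0)) (Or.inr (by simpa using h))⟩
    · refine ⟨2, by norm_num, htriv _ (E.mul_mem hg (E.pow_mem hf 2)) (Or.inl ?_)⟩
      change g (f (f x)) = x
      rw [hgf, hgf, h, hf3]
    · refine ⟨2, by norm_num, htriv _ (E.mul_mem hg (E.pow_mem hf 2)) (Or.inr ?_)⟩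
      change g (f (f x)) = z * x
      rw [hgf, hgf, h, map_mul, map_mul, hfz, hfz, hf3]
    · refine ⟨1, by norm_num, htriv _ (E.mul_mem hg (E.pow_mem hf 1)) ?_⟩
      have : (g * f ^ 1) x = g (f x) := by rw [pow_one]; rfl
      rw [this, hgf, h]
      exact hxy f hf x hx hfx
    · refine ⟨1, by norm_num, htriv _ (E.mul_mem hg (E.pow_mem hf 1)) ?_⟩
      have : (g * f ^ 1) x = g (f x) := by rw [pow_one]; rfl
      rw [this, hgf, h, map_mul, hfz]
      rcases hxy f hf x hx hfx with h | h
      · right; rw [h]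
      · left; rw [h, hzz']
  · by_contra hp3
    apply hex
    apply pow_fix (m := 3) S.hE he
    · exact (Nat.coprime_primes Nat.prime_three S.hp).2 (Ne.symm hp3)
    · exact he3 e he x hx hex

end
end ESA

namespace ESA
section

theorem exists_K {W : Type*} [Group W] {z : W} (hzz : z * z = 1) :
    ∃ K : Subgroup W, ∀ w, w ∈ K ↔ w = 1 ∨ w = z := by
  refine ⟨
    { carrier := {w | w = 1 ∨ w = z}
      one_mem' := Or.inl rfl
      mul_mem' := ?_
      inv_mem' := ?_ }, fun w => Iff.rfl⟩
  · rintro a b (rfl | rfl) (rfl | rfl) <;> simp [hzz]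
  · rintro a (rfl | rfl)
    · simp
    · right
      exact inv_eq_of_mul_eq_one_left hzz

theorem exists_T {W : Type*} [Group W] [Group.IsNilpotent W] {E : Subgroup (MulAut W)} {z : W}
    (hzz : z * z = 1) (hzf : ∀ e ∈ E, e z = z) (R N : Subgroup W) (hRN : R ≤ N)
    (hnorm : ∀ n ∈ N, ∀ r ∈ R, n * r * n⁻¹ ∈ R) (hzc : ∀ n ∈ N, z * n = n * z)
    (hR : Inv E R) (hN : Inv E N) (hne : ∃ r ∈ R, r ≠ 1 ∧ r ≠ z) :
    ∃ T : Subgroup W, T ≤ R ∧ Inv E T ∧ (∃ t ∈ T, t ≠ 1 ∧ t ≠ z) ∧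
      ∀ t ∈ T, ∀ n ∈ N, t * n = n * t ∨ t * n = z * (n * t) := by
  obtain ⟨K, hK⟩ := exists_K hzz
  have hzz' : ∀ w, z * (z * w) = w := fun w => by rw [← mul_assoc, hzz, one_mul]
  let T : Subgroup W :=
    { carrier := {r | r ∈ R ∧ ∀ n ∈ N, r * n = n * r ∨ r * n = z * (n * r)}
      one_mem' := ⟨R.one_mem, fun n _ => by simp⟩
      mul_mem' := by
        rintro a b ⟨ha, ha'⟩ ⟨hb, hb'⟩
        refine ⟨R.mul_mem ha hb, fun n hn => ?_⟩
        have hza := hzc a (hRN ha)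
        rcases ha' n hn with h1 | h1 <;> rcases hb' n hn with h2 | h2
        · left
          rw [mul_assoc, h2, ← mul_assoc, h1, mul_assoc]
        · right
          rw [mul_assoc, h2, ← mul_assoc, ← hza, mul_assoc, ← mul_assoc a, h1, mul_assoc]
        · right
          rw [mul_assoc, h2, ← mul_assoc, h1, mul_assoc, mul_assoc]
        · left
          rw [mul_assoc, h2, ← mul_assoc, ← hza, mul_assoc, ← mul_assoc a, h1, mul_assoc, hzz',
            mul_assoc]
      inv_mem' := by
        rintro a ⟨ha, ha'⟩
        refine ⟨R.inv_mem ha, fun n hn => ?_⟩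
        have hza := hzc a (hRN ha)
        rcases ha' n hn with h1 | h1
        · left
          rw [inv_mul_eq_iff_eq_mul, ← mul_assoc, h1]; simp
        · right
          rw [inv_mul_eq_iff_eq_mul, ← mul_assoc, ← hza, mul_assoc, ← mul_assoc a, h1, mul_assoc,
            hzz']; simp }
  refine ⟨T, fun r hr => hr.1, ?_, ?_, fun t ht => ht.2⟩
  · rintro e he t ⟨ht, ht'⟩
    refine ⟨hR e he t ht, fun n hn => ?_⟩
    have h1 : e⁻¹ n ∈ N := hN _ (E.inv_mem he) n hn
    have h2 : e (e⁻¹ n) = n := by simp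
    rcases ht' _ h1 with h | h
    · left
      have := congrArg e h
      rwa [map_mul, map_mul, h2] at this
    · right
      have := congrArg e h
      rwa [map_mul, map_mul, map_mul, h2, hzf e he] at this
  · have hRK : ¬ R ≤ K := by
      intro h
      obtain ⟨r, hr, h1, h2⟩ := hne
      rcases (hK r).1 (h hr) with h | h
      · exact h1 h
      · exact h2 h
    obtain ⟨r, hr, hrK, hcom⟩ := exists_central_mod hRN hnorm hRK
    rw [hK, not_or] at hrK
    refine ⟨r, ⟨hr, fun n hn => ?_⟩, hrK⟩
    rcases (hK _).1 (hcom n hn) with h | h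
    · left
      rw [mul_inv_eq_one, mul_inv_eq_iff_eq_mul] at h
      exact h
    · right
      rw [mul_inv_eq_iff_eq_mul, mul_inv_eq_iff_eq_mul, mul_assoc] at h
      exact h

theorem sq_cases {W : Type*} [Group W] (Y : Subgroup W) {z : W} (hz : z ∈ Y) (hz1 : z ≠ 1)
    (hzz : z * z = 1)
    (huniq : ∀ a ∈ Y, ∀ b ∈ Y, orderOf a = 2 → orderOf b = 2 → a = b) :
    ∀ a ∈ Y, a * a = 1 → a = 1 ∨ a = z := by
  intro a ha haa
  by_cases h1 : a = 1
  · exact Or.inl h1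
  right
  exact huniq a ha z hz (orderOf_eq_prime (by rw [pow_two, haa]) h1)
    (orderOf_eq_prime (by rw [pow_two, hzz]) hz1)

theorem Setup.stage4 {W : Type*} [Group W] [Finite W] {p : ℕ} {E : Subgroup (MulAut W)}
    (S : Setup W p E) (Y : Subgroup W) (hY : Inv E Y) (hnt : ∃ e ∈ E, ∃ x ∈ Y, e x ≠ x)
    (huniq : ∀ a ∈ Y, ∀ b ∈ Y, orderOf a = 2 → orderOf b = 2 → a = b) :
    ∃ z, QP E z Y ∧ p = 3 := by
  have := S.nilp
  obtain ⟨R, ⟨hRY, hR, hRnt⟩, hRmin⟩ := (Set.toFinite {R : Subgroup W | R ≤ Y ∧ Inv E R ∧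
    ∃ e ∈ E, ∃ x ∈ R, e x ≠ x}).exists_minimal ⟨Y, le_refl Y, hY, hnt⟩
  obtain ⟨z, Q, hp⟩ := S.stage3 R hR hRnt (by
    intro Z hZ hZi
    by_contra! h
    exact hZ.not_ge (hRmin ⟨hZ.le.trans hRY, hZi, h⟩ hZ.le))
    (fun a ha b hb => huniq a (hRY ha) b (hRY hb))
  refine ⟨z, ?_, hp⟩
  suffices h : R = Y by rwa [h] at Q
  have hzz := Q.zsq
  have hzz' : ∀ w, z * (z * w) = w := fun w => by rw [← mul_assoc, hzz, one_mul]
  have hzY := hRY Q.zmem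
  have hu := sq_cases Y hzY Q.zne hzz huniq
  have hzc : ∀ y ∈ Y, z * y = y * z := by
    intro y hy
    rcases hu (y * z * y⁻¹) (Y.mul_mem (Y.mul_mem hy hzY) (Y.inv_mem hy)) (by
      calc y * z * y⁻¹ * (y * z * y⁻¹) = y * (z * z) * y⁻¹ := by group
        _ = 1 := by rw [hzz]; group) with h | h
    · exact absurd (by simpa using h) Q.zne
    · rw [mul_inv_eq_iff_eq_mul] at h
      exact h.symm
  obtain ⟨x, hx, y, hy, hx1, hxz, hy1, hyz, hyx, hyzx, hanti⟩ := Q.nc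
  by_contra hne
  obtain ⟨n, hnY, hnR, hnn⟩ := exists_normalizing (lt_of_le_of_ne hRY hne)
  let N := Y ⊓ Subgroup.normalizer (R : Set W)
  obtain ⟨T, hTR, hTi, ⟨t, ht, ht1, htz⟩, hT⟩ := exists_T hzz Q.zfix R N
    (le_inf hRY Subgroup.le_normalizer)
    (fun n hn r hr => (Subgroup.mem_normalizer_iff.1 hn.2 r).1 hr)
    (fun n hn => hzc n hn.1) hR (hY.inf hR.normalizer) ⟨x, hx, hx1, hxz⟩
  have hTR' : T = R := by
    rcases Q.min T hTR hTi with h | h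
    · rcases h t ht with h | h
      · exact absurd h ht1
      · exact absurd h htz
    · exact h
  subst hTR'
  obtain ⟨r, hr, hc⟩ := Q.absorb n (fun r hr => by
    rcases hT r hr n ⟨hnY, hnn⟩ with h | h
    · exact Or.inl h.symm
    · right
      rw [h, hzz'])
  set c := r * n with hcdef
  have hcY : c ∈ Y := Y.mul_mem (hRY hr) hnY
  have hc1 : c ∉ T := by
    intro h
    apply hnR
    have := T.mul_mem (T.inv_mem hr) h
    rwa [hcdef, inv_mul_cancel_left] at this
  -- some power of `c` squares to `z`
  obtain ⟨k, hk⟩ := S.hW c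
  have hind : ∀ k : ℕ, ∀ c ∈ Y, c ^ 2 ^ k = 1 → c ≠ 1 → c ≠ z → ∃ m : ℕ, c ^ m * c ^ m = z := by
    intro k
    induction k with
    | zero => intro c _ h h1; simp at h; exact absurd h h1
    | succ k ih =>
      intro c hc h h1 h2
      by_cases h3 : c * c = z
      · exact ⟨1, by simpa using h3⟩
      by_cases h4 : c * c = 1
      · rcases hu c hc h4 with h | h
        · exact absurd h h1
        · exact absurd h h2
      obtain ⟨m, hm⟩ := ih (c * c) (Y.mul_mem hc hc) (by
        rw [← pow_two, ← pow_mul, ← pow_succ']; exact h) h4 h3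
      refine ⟨2 * m, ?_⟩
      rw [pow_mul, pow_two]; exact hm
  obtain ⟨m, hm⟩ := hind k c hcY hk (fun h => hc1 (h ▸ T.one_mem)) (fun h => hc1 (h ▸ Q.zmem))
  have hdx : Commute (c ^ m) x := Commute.pow_left (hc x hx) m
  have hdy : Commute (c ^ m) y := Commute.pow_left (hc y hy) m
  have hdY : c ^ m ∈ Y := Y.pow_mem hcY m
  have h5 : (c ^ m * x) * (c ^ m * x) = 1 := by
    calc (c ^ m * x) * (c ^ m * x) = c ^ m * (x * c ^ m) * x := by group
      _ = (c ^ m * c ^ m) * (x * x) := by rw [← hdx.eq]; group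
      _ = 1 := by rw [hm, Q.sq x hx hx1 hxz, hzz]
  have hxy : Commute x y := by
    have h6 : x = (c ^ m)⁻¹ * (c ^ m * x) := by group
    rw [h6]
    apply Commute.mul_left hdy.inv_left
    rcases hu _ (Y.mul_mem hdY (hRY hx)) h5 with h | h <;> rw [h]
    · exact Commute.one_left y
    · exact Q.zcomm y hy
  rw [hxy.eq] at hanti
  exact Q.zne (by simpa using hanti.symm)

end
end ESA

namespace ESA
section

/-- fixed points of a single automorphism -/
def fixS {W : Type*} [Group W] (e : MulAut W) : Subgroup W where
  carrier := {w | e w = w}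
  one_mem' := map_one e
  mul_mem' := by
    intro a b ha hb
    change e (a * b) = a * b
    rw [map_mul, show e a = a from ha, show e b = b from hb]
  inv_mem' := by
    intro a ha
    change e a⁻¹ = a⁻¹
    rw [map_inv, show e a = a from ha]

theorem mem_fixS {W : Type*} [Group W] {e : MulAut W} {w : W} : w ∈ fixS e ↔ e w = w := Iff.rfl

theorem Setup.inv_fixS {W : Type*} [Group W] {p : ℕ} {E : Subgroup (MulAut W)}
    (S : Setup W p E) {e : MulAut W} (he : e ∈ E) : Inv E (fixS e) := by
  intro f hf w hw
  have := congrArg (fun g : MulAut W => g w) (S.hEab e he f hf)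
  simp only [MulAut.mul_apply] at this
  rw [mem_fixS] at hw ⊢
  rw [this, hw]

structure Ctx (W : Type*) [Group W] (p : ℕ) (E : Subgroup (MulAut W)) (z : W) : Prop where
  S : Setup W p E
  zne : z ≠ 1
  zsq : z * z = 1
  zfix : ∀ e ∈ E, e z = z
  zcen : ∀ w, z * w = w * z
  fixE : ∀ w, (∀ e ∈ E, e w = w) → w = 1 ∨ w = z
  dich : ∀ e ∈ E, e ≠ 1 → (∀ w, e w = w → w = 1 ∨ w = z) ∨ QP E z (fixS e)
  ex : ∃ e ∈ E, e ≠ 1 ∧ QP E z (fixS e)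

theorem Setup.stage5 {W : Type*} [Group W] [Finite W] {p : ℕ} {E : Subgroup (MulAut W)}
    (S : Setup W p E)
    (hfix : ∀ e ∈ E, e ≠ 1 → {w : W | e w = w ∧ orderOf w = 2}.Subsingleton) :
    p = 3 ∧ ∃ z, Ctx W p E z := by
  have hex : ∃ e ∈ E, e ≠ 1 ∧ ∃ f ∈ E, ∃ x ∈ fixS e, f x ≠ x := by
    by_contra! h
    apply S.hEnc
    have : Subsingleton E := by
      constructor
      have h1 : ∀ f ∈ E, f = 1 := by
        intro f hf
        have := S.gen ⊤ (Inv.top) (fixS f) (fun e he h1 w _ hw => h e he h1 f hf w hw)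
        ext w
        exact this (Subgroup.mem_top w)
      intro a b
      ext1
      rw [h1 a.1 a.2, h1 b.1 b.2]
    infer_instance
  have hun : ∀ e ∈ E, e ≠ 1 → ∀ a ∈ fixS e, ∀ b ∈ fixS e, orderOf a = 2 → orderOf b = 2 → a = b :=
    fun e he h1 a ha b hb h2 h3 => hfix e he h1 ⟨ha, h2⟩ ⟨hb, h3⟩
  obtain ⟨e, he, he1, hnt⟩ := hex
  obtain ⟨z, Q, hp⟩ := S.stage4 _ (S.inv_fixS he) hnt (hun e he he1)
  have hfixE : ∀ w, (∀ e ∈ E, e w = w) → w = 1 ∨ w = z := by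
    intro w hw
    exact Q.fixed w (hw e he) hw
  have hord : ∀ z : W, z ≠ 1 → z * z = 1 → orderOf z = 2 := by
    intro z h1 h2
    exact orderOf_eq_prime (by rw [pow_two, h2]) h1
  have hdich : ∀ e ∈ E, e ≠ 1 → (∀ w, e w = w → w = 1 ∨ w = z) ∨ QP E z (fixS e) := by
    intro e he he1
    by_cases hnt : ∃ f ∈ E, ∃ x ∈ fixS e, f x ≠ x
    · right
      obtain ⟨z', Q', hp⟩ := S.stage4 _ (S.inv_fixS he) hnt (hun e he he1)
      have : z' = z := hun e he he1 z' Q'.zmem z (Q.zfix e he) (hord _ Q'.zne Q'.zsq)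
        (hord _ Q.zne Q.zsq)
      rwa [this] at Q'
    · left
      push Not at hnt
      intro w hw
      exact hfixE w (fun f hf => hnt f hf w hw)
  refine ⟨hp, z, S, Q.zne, Q.zsq, Q.zfix, ?_, hfixE, hdich, e, he, he1, Q⟩
  have := S.gen ⊤ (Inv.top) (Subgroup.centralizer {z}) (fun e he h1 w _ hw => by
    rw [Subgroup.mem_centralizer_singleton_iff]
    rcases hdich e he h1 with h | h
    · rcases h w hw with h | h <;> rw [h]
      simp
    · exact (h.zcomm w hw).symm)
  intro w
  have := this (Subgroup.mem_top w)
  rw [Subgroup.mem_centralizer_singleton_iff] at this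
  exact this.symm

/-- Every invariant subgroup not inside `⟨z⟩` contains a quaternion piece. -/
theorem Ctx.piece {W : Type*} [Group W] [Finite W] {p : ℕ} {E : Subgroup (MulAut W)} {z : W}
    (X : Ctx W p E z) (T : Subgroup W) (hT : Inv E T) (hne : ∃ t ∈ T, t ≠ 1 ∧ t ≠ z) :
    ∃ e ∈ E, e ≠ 1 ∧ QP E z (fixS e) ∧ fixS e ≤ T := by
  by_contra! hcon
  obtain ⟨K, hK⟩ := exists_K X.zsq
  have : T ≤ K := by
    apply X.S.gen T hT
    intro e he h1 w hw hew
    rw [hK]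
    rcases X.dich e he h1 with h | Q
    · exact h w hew
    · rcases Q.min (fixS e ⊓ T) inf_le_left ((X.S.inv_fixS he).inf hT) with h | h
      · exact h w ⟨hew, hw⟩
      · exact absurd (inf_eq_left.1 h) (hcon e he h1 Q)
  obtain ⟨t, ht, h1, h2⟩ := hne
  rcases (hK t).1 (this ht) with h | h
  · exact h1 h
  · exact h2 h

theorem Ctx.comm_aux {W : Type*} [Group W] [Finite W] {p : ℕ} {E : Subgroup (MulAut W)} {z : W}
    (X : Ctx W p E z) : ∀ n : ℕ, ∀ D : Subgroup W, Nat.card D ≤ n → Inv E D → z ∈ D → 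
      (∀ a ∈ D, a * a = 1 ∨ a * a = z) ∧ (∀ a ∈ D, ∀ b ∈ D, a * b = b * a ∨ a * b = z * (b * a)) := by
  have hnil := X.S.nilp
  have hzz := X.zsq
  have hzz' : ∀ w, z * (z * w) = w := fun w => by rw [← mul_assoc, hzz, one_mul]
  intro n
  induction n with
  | zero =>
    intro D hD
    have := Nat.card_pos (α := D)
    omega
  | succ n ih =>
    intro D hD hDi hzD
    by_cases hne : ∃ t ∈ D, t ≠ 1 ∧ t ≠ z
    swap
    · push Not at hne
      have hne' : ∀ t ∈ D, t = 1 ∨ t = z := fun t ht => by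
        by_cases h : t = 1
        · exact Or.inl h
        · exact Or.inr (hne t ht h)
      constructor
      · intro a ha
        rcases hne' a ha with rfl | rfl
        · simp
        · left; exact hzz
      · intro a ha b hb
        left
        rcases hne' a ha with rfl | rfl
        · simp
        · exact X.zcen b
    obtain ⟨T, hTD, hTi, hTne, hT⟩ := exists_T hzz X.zfix D D le_rfl
      (fun n hn r hr => D.mul_mem (D.mul_mem hn hr) (D.inv_mem hn)) (fun n _ => X.zcen n)
      hDi hDi hne
    obtain ⟨e, he, he1, Q, hle⟩ := X.piece T hTi hTne
    have hRD := hle.trans hTD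
    set R := fixS e
    let D' := D ⊓ Subgroup.centralizer (R : Set W)
    have hdec : ∀ w ∈ D, ∃ r ∈ R, ∃ c ∈ D', w = r * c := by
      intro w hw
      obtain ⟨r, hr, h⟩ := Q.absorb w (fun r hr => by
        rcases hT r (hle hr) w hw with h | h
        · exact Or.inl h.symm
        · right; rw [h, hzz'])
      refine ⟨r⁻¹, R.inv_mem hr, r * w, ⟨D.mul_mem (hRD hr) hw, ?_⟩, by simp⟩
      refine Subgroup.mem_centralizer_iff.2 ?_
      intro s hs
      exact (h s hs).symm
    obtain ⟨x, hx, y, hy, hx1, hxz, hy1, hyz, hyx, hyzx, hanti⟩ := Q.nc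
    have hlt : D' < D := by
      refine lt_of_le_of_ne inf_le_left ?_
      intro h
      have h1 : x ∈ D' := h ▸ hRD hx
      have h2 := Subgroup.mem_centralizer_iff.1 h1.2 y hy
      rw [← h2] at hanti
      exact X.zne (by simpa using hanti.symm)
    have hcard : Nat.card D' < Nat.card D := by
      have := Set.ncard_lt_ncard (s := (D' : Set W)) (t := D) hlt (Set.toFinite _)
      exact this
    obtain ⟨hs, hc⟩ := ih D' (by omega) (hDi.inf Q.inv.centralizer) ⟨hzD, by
      refine Subgroup.mem_centralizer_iff.2 ?_
      intro s _
      exact (X.zcen s).symm⟩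
    have hRc : ∀ a ∈ R, ∀ b ∈ R, a * b = b * a ∨ a * b = z * (b * a) :=
      fun a ha b hb => hT a (hle ha) b (hRD hb)
    have hRs : ∀ a ∈ R, a * a = 1 ∨ a * a = z := by
      intro a ha
      by_cases h1 : a = 1
      · left; simp [h1]
      by_cases h2 : a = z
      · left; rw [h2, hzz]
      · right; exact Q.sq a ha h1 h2
    have hcomm : ∀ r ∈ R, ∀ c ∈ D', r * c = c * r := fun r hr c hc =>
      Subgroup.mem_centralizer_iff.1 hc.2 r hr
    constructor
    · intro a ha
      obtain ⟨r, hr, c, hcD, rfl⟩ := hdec a ha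
      have : r * c * (r * c) = (r * r) * (c * c) := by
        calc r * c * (r * c) = r * (c * r) * c := by group
          _ = _ := by rw [← hcomm r hr c hcD]; group
      rw [this]
      rcases hRs r hr with h1 | h1 <;> rcases hs c hcD with h2 | h2 <;> rw [h1, h2] <;> simp [hzz]
    · intro a ha b hb
      obtain ⟨r, hr, c, hcD, rfl⟩ := hdec a ha
      obtain ⟨s, hs, d, hdD, rfl⟩ := hdec b hb
      have h1 : r * c * (s * d) = (r * s) * (c * d) := by
        calc r * c * (s * d) = r * (c * s) * d := by group
          _ = _ := by rw [← hcomm s hs c hcD]; group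
      have h2 : s * d * (r * c) = (s * r) * (d * c) := by
        calc s * d * (r * c) = s * (d * r) * c := by group
          _ = _ := by rw [← hcomm r hr d hdD]; group
      rw [h1, h2]
      rcases hRc r hr s hs with h3 | h3 <;> rcases hc c hcD d hdD with h4 | h4 <;> rw [h3, h4]
      · exact Or.inl rfl
      · right
        rw [← mul_assoc, ← X.zcen, mul_assoc]
      · right
        rw [mul_assoc]
      · left
        rw [mul_assoc, ← mul_assoc _ z, ← X.zcen, mul_assoc, hzz']

theorem Ctx.sq {W : Type*} [Group W] [Finite W] {p : ℕ} {E : Subgroup (MulAut W)} {z : W}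
    (X : Ctx W p E z) (a : W) : a * a = 1 ∨ a * a = z :=
  (X.comm_aux _ ⊤ le_rfl Inv.top trivial).1 a trivial

theorem Ctx.comm {W : Type*} [Group W] [Finite W] {p : ℕ} {E : Subgroup (MulAut W)} {z : W}
    (X : Ctx W p E z) (a b : W) : a * b = b * a ∨ a * b = z * (b * a) :=
  (X.comm_aux _ ⊤ le_rfl Inv.top trivial).2 a trivial b trivial

end
end ESA

namespace ESA
section

def Piece {W : Type*} [Group W] (E : Subgroup (MulAut W)) (z : W) (R : Subgroup W) : Prop :=
  ∃ e ∈ E, e ≠ 1 ∧ R = fixS e ∧ QP E z R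

theorem Piece.qp {W : Type*} [Group W] {E : Subgroup (MulAut W)} {z : W} {R : Subgroup W}
    (h : Piece E z R) : QP E z R := by
  obtain ⟨e, he, h1, rfl, Q⟩ := h
  exact Q

theorem eq_of_le_card {W : Type*} [Group W] [Finite W] {A B : Subgroup W} (h : A ≤ B)
    (hc : Nat.card B ≤ Nat.card A) : A = B :=
  Subgroup.eq_of_le_of_card_ge h hc

theorem QP.inter {W : Type*} [Group W] [Finite W] {E : Subgroup (MulAut W)} {z : W}
    {R R' : Subgroup W} (Q : QP E z R) (Q' : QP E z R') (hne : R ≠ R') :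
    ∀ w, w ∈ R → w ∈ R' → w = 1 ∨ w = z := by
  intro w h1 h2
  rcases Q.min (R ⊓ R') inf_le_left (Q.inv.inf Q'.inv) with h | h
  · exact h w ⟨h1, h2⟩
  · exact absurd (eq_of_le_card (inf_eq_left.1 h) (by rw [Q.card, Q'.card])) hne

theorem QP.center {W : Type*} [Group W] {E : Subgroup (MulAut W)} {z : W}
    {R : Subgroup W} (Q : QP E z R) :
    ∀ w, w ∈ R → (∀ r ∈ R, r * w = w * r) → w = 1 ∨ w = z := by
  intro w h1 h2
  rcases Q.min (R ⊓ Subgroup.centralizer (R : Set W)) inf_le_left (Q.inv.inf Q.inv.centralizer)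
    with h | h
  · exact h w ⟨h1, Subgroup.mem_centralizer_iff.2 h2⟩
  · exfalso
    obtain ⟨x, hx, y, hy, hx1, hxz, hy1, hyz, hyx, hyzx, hanti⟩ := Q.nc
    have h3 := inf_eq_left.1 h
    have h4 := Subgroup.mem_centralizer_iff.1 (h3 hx) y hy
    rw [← h4] at hanti
    exact Q.zne (by simpa using hanti.symm)

theorem Ctx.pcomm {W : Type*} [Group W] [Finite W] {p : ℕ} {E : Subgroup (MulAut W)} {z : W}
    (X : Ctx W p E z) {R R' : Subgroup W} (hR : Piece E z R) (hR' : Piece E z R') (hne : R ≠ R') :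
    ∀ r ∈ R, ∀ s ∈ R', r * s = s * r := by
  have Q := hR.qp
  have Q' := hR'.qp
  obtain ⟨e, he, he1, hRe, -⟩ := hR
  have hzz' : ∀ w, z * (z * w) = w := fun w => by rw [← mul_assoc, X.zsq, one_mul]
  obtain ⟨y, hy, -, -, hy1, hyz, -⟩ := Q'.nc
  have hey : e y ≠ y := by
    intro h
    rcases Q.inter Q' hne y (hRe ▸ h) hy with h | h
    · exact hy1 h
    · exact hyz h
  have hc : ∀ r ∈ R, r * (y⁻¹ * e y) = (y⁻¹ * e y) * r := by
    intro r hr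
    have her : e r = r := by rw [hRe] at hr; exact hr
    change Commute r (y⁻¹ * e y)
    rcases X.comm r y with h | h
    · have h2 := congrArg e h
      rw [map_mul, map_mul, her] at h2
      have h1 : Commute r y := h
      exact h1.inv_right.mul_right h2
    · have h2 := congrArg e h
      rw [map_mul, map_mul, map_mul, her, X.zfix e he] at h2
      have h3 : r * y⁻¹ = z * (y⁻¹ * r) := by
        have : y * (r * y⁻¹) = z * r := by
          rw [← mul_assoc, mul_inv_eq_iff_eq_mul, mul_assoc, h, hzz']
        rw [← mul_assoc, X.zcen, mul_assoc, ← this]; simp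
      change r * (y⁻¹ * e y) = (y⁻¹ * e y) * r
      rw [← mul_assoc, h3, mul_assoc, mul_assoc, h2, ← mul_assoc y⁻¹, ← X.zcen, mul_assoc, hzz',
        mul_assoc]
  rcases Q'.min (R' ⊓ Subgroup.centralizer (R : Set W)) inf_le_left
    (Q'.inv.inf Q.inv.centralizer) with h | h
  · exfalso
    rcases h _ ⟨R'.mul_mem (R'.inv_mem hy) (Q'.inv e he y hy), Subgroup.mem_centralizer_iff.2 hc⟩
      with h | h
    · exact hey (inv_mul_eq_one.1 h).symm
    · apply hey
      apply X.S.fix2 he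
      rw [inv_mul_eq_iff_eq_mul, ← X.zcen] at h
      rw [h, map_mul, X.zfix e he, h, hzz']
  · intro r hr s hs
    exact Subgroup.mem_centralizer_iff.1 (inf_eq_left.1 h hs) r hr

theorem Ctx.cover {W : Type*} [Group W] [Finite W] {p : ℕ} {E : Subgroup (MulAut W)} {z : W}
    (X : Ctx W p E z) (T : Subgroup W) (hz : z ∈ T) (hT : ∀ R, Piece E z R → R ≤ T) : T = ⊤ := by
  rw [eq_top_iff]
  apply X.S.gen ⊤ Inv.top
  intro e he h1 w _ hw
  rcases X.dich e he h1 with h | h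
  · rcases h w hw with rfl | rfl
    · exact T.one_mem
    · exact hz
  · exact hT _ ⟨e, he, h1, rfl, h⟩ hw

theorem Ctx.cardE {W : Type*} [Group W] [Finite W] {E : Subgroup (MulAut W)} {z : W}
    (X : Ctx W 3 E z) : Nat.card E = 9 ∧
      ∃ R R', Piece E z R ∧ Piece E z R' ∧ R ≠ R' := by
  obtain ⟨e, he, he1, Q⟩ := X.ex
  obtain ⟨R', hR', hnt'⟩ : ∃ R', Piece E z R' ∧ ∃ x ∈ R', e x ≠ x := by
    by_contra! h
    apply he1
    have := X.cover (fixS e) Q.zmem (fun R hR x hx => h R hR x hx)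
    ext w
    have h2 : w ∈ fixS e := this ▸ Subgroup.mem_top w
    exact h2
  have hne : fixS e ≠ R' := by
    rintro rfl
    obtain ⟨x, hx, hx'⟩ := hnt'
    exact hx' hx
  refine ⟨?_, fixS e, R', ⟨e, he, he1, rfl, Q⟩, hR', hne⟩
  obtain ⟨f, hf, hfn⟩ := Q.nt
  have Q' := hR'.qp
  have hkey : ∀ k ∈ E, (∀ r ∈ fixS e, k r = r) → (∀ r ∈ R', k r = r) → k = 1 := by
    intro k hk h1 h2
    by_contra hk1
    have a1 : fixS e ≤ fixS k := h1
    have a2 : R' ≤ fixS k := h2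
    rcases X.dich k hk hk1 with h | Q''
    · obtain ⟨x, hx, _, _, h3, h4, _⟩ := Q.nc
      rcases h x (h1 x hx) with h | h
      · exact h3 h
      · exact h4 h
    · exact hne ((eq_of_le_card a1 (by rw [Q.card, Q''.card])).trans
        (eq_of_le_card a2 (by rw [Q'.card, Q''.card])).symm)
  have hsurj : ∀ g ∈ E, ∃ i j : Fin 3, g = (f ^ (i : ℕ) * e ^ (j : ℕ))⁻¹ := by
    intro g hg
    obtain ⟨i, hi, h1⟩ := Q.cyc f hf g hg hfn
    obtain ⟨j, hj, h2⟩ := Q'.cyc e he (g * f ^ i) (E.mul_mem hg (E.pow_mem hf i)) hnt'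
    refine ⟨⟨i, hi⟩, ⟨j, hj⟩, ?_⟩
    have h3 : ∀ j : ℕ, ∀ r ∈ fixS e, (e ^ j) r = r := by
      intro j r hr
      induction j with
      | zero => simp
      | succ j ih => rw [pow_succ, MulAut.mul_apply, show e r = r from hr, ih]
    have := hkey (g * f ^ i * e ^ j) (E.mul_mem (E.mul_mem hg (E.pow_mem hf i)) (E.pow_mem he j))
      (fun r hr => by rw [MulAut.mul_apply, h3 j r hr, h1 r hr]) h2
    rw [mul_assoc] at this
    exact eq_inv_of_mul_eq_one_left this
  have hle : Nat.card E ≤ 9 := by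
    let φ : Fin 3 × Fin 3 → E := fun ij =>
      ⟨(f ^ (ij.1 : ℕ) * e ^ (ij.2 : ℕ))⁻¹, E.inv_mem (E.mul_mem (E.pow_mem hf _) (E.pow_mem he _))⟩
    have hφ : Function.Surjective φ := by
      rintro ⟨g, hg⟩
      obtain ⟨i, j, h⟩ := hsurj g hg
      exact ⟨(i, j), Subtype.ext h.symm⟩
    have := Nat.card_le_card_of_surjective φ hφ
    simpa using this
  have h3 := Fact.mk Nat.prime_three
  obtain ⟨k, hk⟩ := IsPGroup.iff_card.1 X.S.hE
  have hk3 : k < 3 := by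
    by_contra! h
    have := Nat.pow_le_pow_right (n := 3) (by norm_num) h
    omega
  interval_cases k
  · exfalso
    apply X.S.hEnc
    have := (Nat.card_eq_one_iff_unique.1 (by simpa using hk : Nat.card E = 1)).1
    infer_instance
  · exfalso
    apply X.S.hEnc
    exact isCyclic_of_prime_card (p := 3) (by simpa using hk)
  · simpa using hk

theorem Ctx.pieces_le {W : Type*} [Group W] [Finite W] {E : Subgroup (MulAut W)} {z : W}
    (X : Ctx W 3 E z) (F : Finset (Subgroup W)) (hF : ∀ R ∈ F, Piece E z R) : F.card ≤ 4 := by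
  classical
  have hF' : ∀ R : F, ∃ e ∈ E, e ≠ 1 ∧ R.1 = fixS e := fun R => by
    obtain ⟨e, he, h1, h2, -⟩ := hF R.1 R.2
    exact ⟨e, he, h1, h2⟩
  choose g hg hg1 hgR using hF'
  have hinv : ∀ e : MulAut W, fixS e⁻¹ = fixS e := by
    intro e
    ext w
    rw [mem_fixS, mem_fixS]
    constructor
    · intro h
      have := congrArg e h
      simpa using this.symm
    · intro h
      have := congrArg (e⁻¹ : MulAut W) h
      simpa using this.symm
  let φ : Option (F × Bool) → E := fun o => match o with
    | none => 1
    | some (R, true) => ⟨g R, hg R⟩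
    | some (R, false) => ⟨(g R)⁻¹, E.inv_mem (hg R)⟩
  have hgg : ∀ R, g R ≠ (g R)⁻¹ := by
    intro R h
    apply hg1 R
    ext w
    apply X.S.fix2 (hg R)
    nth_rewrite 1 [h]
    simp
  have hφ : Function.Injective φ := by
    rintro (_ | ⟨R, _ | _⟩) (_ | ⟨R', _ | _⟩) h
    · rfl
    · exact absurd (congrArg Subtype.val h).symm (by simpa [φ] using hg1 R')
    · exact absurd (congrArg Subtype.val h).symm (by simpa [φ] using hg1 R')
    · exact absurd (congrArg Subtype.val h) (by simpa [φ] using hg1 R)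
    · have h1 : (g R)⁻¹ = (g R')⁻¹ := congrArg Subtype.val h
      have h2 : R = R' := Subtype.ext (by rw [hgR R, hgR R', inv_injective h1])
      rw [h2]
    · have h1 : (g R)⁻¹ = g R' := congrArg Subtype.val h
      have h2 : R = R' := Subtype.ext (by rw [hgR R, hgR R', ← h1, hinv])
      exact absurd (h2 ▸ h1).symm (hgg R')
    · exact absurd (congrArg Subtype.val h) (by simpa [φ] using hg1 R)
    · have h1 : g R = (g R')⁻¹ := congrArg Subtype.val h
      have h2 : R = R' := Subtype.ext (by rw [hgR R, hgR R', h1, hinv])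
      exact absurd (h2 ▸ h1) (hgg R')
    · have h1 : g R = g R' := congrArg Subtype.val h
      have h2 : R = R' := Subtype.ext (by rw [hgR R, hgR R', h1])
      rw [h2]
  have := Nat.card_le_card_of_injective φ hφ
  rw [X.cardE.1] at this
  simp at this
  omega

end
end ESA

namespace ESA
section
open scoped commutatorElement

theorem card_sup_mul {W : Type*} [Group W] [Finite W] (H K : Subgroup W) [K.Normal] :
    Nat.card (H ⊔ K : Subgroup W) * Nat.card (H ⊓ K : Subgroup W) = Nat.card H * Nat.card K := by
  have h1 := Subgroup.relIndex_mul_relIndex ⊥ K (H ⊔ K) bot_le le_sup_right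
  have h2 := Subgroup.relIndex_mul_relIndex ⊥ (H ⊓ K) H bot_le inf_le_left
  rw [Subgroup.relIndex_sup_right, Subgroup.relIndex_bot_left, Subgroup.relIndex_bot_left] at h1
  rw [Subgroup.inf_relIndex_left, Subgroup.relIndex_bot_left, Subgroup.relIndex_bot_left] at h2
  rw [← h1, ← h2]
  ring

theorem Ctx.mem_center {W : Type*} [Group W] [Finite W] {p : ℕ} {E : Subgroup (MulAut W)} {z : W}
    (X : Ctx W p E z) (w : W) : w ∈ Subgroup.center W ↔ w = 1 ∨ w = z := by
  constructor
  · intro hw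
    by_contra! hcon
    obtain ⟨e, he, he1, Q, hle⟩ := X.piece (Subgroup.center W) (by
      intro e he y hy
      rw [Subgroup.mem_center_iff] at hy ⊢
      intro g
      have := congrArg e (hy (e⁻¹ g))
      simpa using this) ⟨w, hw, hcon⟩
    obtain ⟨x, hx, y, hy, hx1, hxz, hy1, hyz, hyx, hyzx, hanti⟩ := Q.nc
    have h4 := Subgroup.mem_center_iff.1 (hle hx) y
    rw [← h4] at hanti
    exact X.zne (by simpa using hanti.symm)
  · rintro (rfl | rfl)
    · exact Subgroup.one_mem _
    · rw [Subgroup.mem_center_iff]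
      exact fun g => (X.zcen g).symm

theorem Ctx.card_center {W : Type*} [Group W] [Finite W] {p : ℕ} {E : Subgroup (MulAut W)} {z : W}
    (X : Ctx W p E z) : Nat.card (Subgroup.center W) = 2 := by
  have h1 : ((Subgroup.center W : Subgroup W) : Set W) = {1, z} := by
    ext w
    simpa using X.mem_center w
  have h2 : Set.ncard ((Subgroup.center W : Subgroup W) : Set W) = 2 := by
    rw [h1, Set.ncard_pair X.zne.symm]
  exact h2

theorem Ctx.normal {W : Type*} [Group W] [Finite W] {p : ℕ} {E : Subgroup (MulAut W)} {z : W}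
    (X : Ctx W p E z) {D : Subgroup W} (hz : z ∈ D) : D.Normal := by
  constructor
  intro n hn g
  rcases X.comm g n with h | h <;> rw [h]
  · simpa using hn
  · simpa [mul_assoc] using D.mul_mem hz hn

theorem Ctx.extraspecial {W : Type*} [Group W] [Finite W] {p : ℕ} {E : Subgroup (MulAut W)} {z : W}
    (X : Ctx W p E z) : Subgroup.center W = commutator W ∧ frattini W = Subgroup.center W := by
  have hzz' : ∀ w, z * (z * w) = w := fun w => by rw [← mul_assoc, X.zsq, one_mul]
  obtain ⟨e, he, he1, Q⟩ := X.ex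
  obtain ⟨x, hx, y, hy, hx1, hxz, hy1, hyz, hyx, hyzx, hanti⟩ := Q.nc
  constructor
  · apply le_antisymm
    · intro w hw
      rcases (X.mem_center w).1 hw with rfl | rfl
      · exact Subgroup.one_mem _
      · have : w = ⁅x, y⁆ := by
          rw [commutatorElement_def, hanti]; group
        rw [this]
        exact Subgroup.commutator_mem_commutator (Subgroup.mem_top x) (Subgroup.mem_top y)
    · rw [commutator, Subgroup.commutator_le]
      intro a _ b _
      rw [X.mem_center, commutatorElement_def]
      rcases X.comm a b with h | h <;> rw [h]
      · left; group
      · right; group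
  · apply le_antisymm
    · intro w hw
      by_contra hwc
      rw [Subgroup.mem_center_iff] at hwc
      push Not at hwc
      obtain ⟨u, hu⟩ := hwc
      have hco : IsCoatom (Subgroup.centralizer {u} : Subgroup W) := by
        constructor
        · intro h
          have : w ∈ Subgroup.centralizer {u} := h ▸ Subgroup.mem_top w
          rw [Subgroup.mem_centralizer_singleton_iff] at this
          exact hu this.symm
        · intro N hN
          obtain ⟨v, hvN, hv⟩ := SetLike.exists_of_lt hN
          rw [Subgroup.mem_centralizer_singleton_iff] at hv
          have hv' : v * u = z * (u * v) := (X.comm v u).resolve_left hv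
          rw [eq_top_iff]
          intro g _
          rcases X.comm g u with h | h
          · exact hN.le (Subgroup.mem_centralizer_singleton_iff.2 h)
          · have h1 : v⁻¹ * g ∈ Subgroup.centralizer {u} := by
              rw [Subgroup.mem_centralizer_singleton_iff]
              have h2 : v * (u * (v⁻¹ * g)) = g * u := by
                rw [← mul_assoc, hv', h, mul_assoc, mul_assoc, mul_inv_cancel_left]
              rw [mul_assoc, ← h2, inv_mul_cancel_left]
            have := N.mul_mem hvN (hN.le h1)
            rwa [mul_inv_cancel_left] at this
      have := frattini_le_coatom hco hw
      rw [Subgroup.mem_centralizer_singleton_iff] at this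
      exact hu this.symm
    · refine le_iInf₂ ?_
      intro M hM
      by_contra hcon
      have htop : M ⊔ Subgroup.center W = ⊤ := by
        apply hM.2
        exact lt_of_le_of_ne le_sup_left (fun h => hcon (h ▸ le_sup_right))
      have h1 : x ∈ M ⊔ Subgroup.center W := htop ▸ Subgroup.mem_top x
      rw [Subgroup.mem_sup_of_normal_right] at h1
      obtain ⟨m, hm, c, hc, hmc⟩ := h1
      apply hcon
      have hzM : z ∈ M := by
        rw [← Q.sq x hx hx1 hxz, ← hmc]
        rcases (X.mem_center c).1 hc with rfl | rfl
        · simpa using M.mul_mem hm hm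
        · rw [← X.zcen, mul_assoc, ← mul_assoc m, ← X.zcen, mul_assoc, hzz']
          exact M.mul_mem hm hm
      intro w hw
      rcases (X.mem_center w).1 hw with rfl | rfl
      · exact M.one_mem
      · exact hzM

theorem Ctx.center_le {W : Type*} [Group W] [Finite W] {p : ℕ} {E : Subgroup (MulAut W)} {z : W}
    (X : Ctx W p E z) {D : Subgroup W} (hz : z ∈ D) : Subgroup.center W ≤ D := by
  intro w hw
  rcases (X.mem_center w).1 hw with rfl | rfl
  · exact D.one_mem
  · exact hz

theorem Ctx.sup_cent {W : Type*} [Group W] [Finite W] {p : ℕ} {E : Subgroup (MulAut W)} {z : W}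
    (X : Ctx W p E z) (F : Finset (Subgroup W)) (hF : ∀ R ∈ F, Piece E z R) (R : Subgroup W)
    (hR : Piece E z R) (hRF : R ∉ F) :
    Subgroup.center W ⊔ F.sup id ≤ Subgroup.centralizer (R : Set W) := by
  apply sup_le
  · exact Subgroup.center_le_centralizer _
  · apply Finset.sup_le
    intro R' hR' s hs
    rw [Subgroup.mem_centralizer_iff]
    intro r hr
    exact X.pcomm hR (hF R' hR') (fun h => hRF (h ▸ hR')) r hr s hs

theorem Ctx.card_sup {W : Type*} [Group W] [Finite W] {p : ℕ} {E : Subgroup (MulAut W)} {z : W}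
    (X : Ctx W p E z) (F : Finset (Subgroup W)) (hF : ∀ R ∈ F, Piece E z R) :
    Nat.card (Subgroup.center W ⊔ F.sup id : Subgroup W) = 2 * 4 ^ F.card := by
  classical
  induction F using Finset.induction_on with
  | empty => simpa using X.card_center
  | insert R F hRF ih =>
    have hR := hF R (Finset.mem_insert_self R F)
    have hF' : ∀ R ∈ F, Piece E z R := fun R hR => hF R (Finset.mem_insert_of_mem hR)
    have Q := hR.qp
    have := X.normal Q.zmem
    have h1 := card_sup_mul (Subgroup.center W ⊔ F.sup id) R
    have h2 : (Subgroup.center W ⊔ F.sup id) ⊓ R = Subgroup.center W := by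
      apply le_antisymm
      · rintro w ⟨h1, h2⟩
        rw [X.mem_center]
        exact Q.center w h2 (Subgroup.mem_centralizer_iff.1 (X.sup_cent F hF' R hR hRF h1))
      · exact le_inf le_sup_left (X.center_le Q.zmem)
    rw [h2, X.card_center, ih hF', Q.card] at h1
    rw [Finset.sup_insert, Finset.card_insert_of_notMem hRF]
    have h3 : Subgroup.center W ⊔ (id R ⊔ F.sup id) = Subgroup.center W ⊔ F.sup id ⊔ R := by
      rw [id, sup_comm R, sup_assoc]
    rw [h3]
    rw [pow_succ]
    omega

/-- extension of an elementary abelian subgroup by an involution -/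
theorem Ctx.extend {W : Type*} [Group W] [Finite W] {p : ℕ} {E : Subgroup (MulAut W)} {z : W}
    (X : Ctx W p E z) (B : Subgroup W) (hz : z ∈ B) (hsq : ∀ b ∈ B, b * b = 1) (u : W)
    (huu : u * u = 1) (hu : ∀ b ∈ B, b * u = u * b) (w : W) (hw : ∀ b ∈ B, b * w = w * b)
    (hwu : u * w ≠ w * u) :
    ∃ B' : Subgroup W, z ∈ B' ∧ (∀ b ∈ B', b * b = 1) ∧ Nat.card B' = 2 * Nat.card B ∧
      ∀ v, (∀ b ∈ B, b * v = v * b) → u * v = v * u → ∀ b ∈ B', b * v = v * b := by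
  have hn := X.normal hz
  obtain ⟨K, hK⟩ := exists_K huu
  have hu1 : u ≠ 1 := by
    rintro rfl
    simp at hwu
  have hKc : Nat.card K = 2 := by
    have h1 : (K : Set W) = {1, u} := by
      ext w
      simpa using hK w
    have h2 : Set.ncard (K : Set W) = 2 := by
      rw [h1, Set.ncard_pair hu1.symm]
    exact h2
  have hmem : ∀ b ∈ K ⊔ B, ∃ c ∈ B, b = c ∨ b = u * c := by
    intro b hb
    rw [Subgroup.mem_sup_of_normal_right] at hb
    obtain ⟨k, hk, c, hc, rfl⟩ := hb
    refine ⟨c, hc, ?_⟩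
    rcases (hK k).1 hk with rfl | rfl
    · left; simp
    · right; rfl
  refine ⟨K ⊔ B, Subgroup.mem_sup_right hz, ?_, ?_, ?_⟩
  · intro b hb
    obtain ⟨c, hc, rfl | rfl⟩ := hmem b hb
    · exact hsq _ hc
    · rw [mul_assoc, ← mul_assoc c, hu c hc, mul_assoc, ← mul_assoc, huu, hsq c hc, one_mul]
  · have h1 := card_sup_mul K B
    have h2 : K ⊓ B = ⊥ := by
      rw [eq_bot_iff]
      rintro k ⟨h1, h2⟩
      rcases (hK k).1 h1 with rfl | rfl
      · exact Subgroup.one_mem _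
      · exact absurd (hw _ h2) hwu
    rw [h2, hKc, Subgroup.card_bot, mul_one] at h1
    exact h1
  · intro v h1 h2 b hb
    obtain ⟨c, hc, rfl | rfl⟩ := hmem b hb
    · exact h1 _ hc
    · rw [mul_assoc, h1 c hc, ← mul_assoc, h2, mul_assoc]

theorem Ctx.pair {W : Type*} [Group W] [Finite W] {p : ℕ} {E : Subgroup (MulAut W)} {z : W}
    (X : Ctx W p E z) (B : Subgroup W) (hz : z ∈ B) (hsq : ∀ b ∈ B, b * b = 1)
    {R R' : Subgroup W} (hR : Piece E z R) (hR' : Piece E z R') (hne : R ≠ R')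
    (hBR : ∀ r ∈ R, ∀ b ∈ B, b * r = r * b) (hBR' : ∀ r ∈ R', ∀ b ∈ B, b * r = r * b) :
    ∃ B' : Subgroup W, z ∈ B' ∧ (∀ b ∈ B', b * b = 1) ∧ Nat.card B' = 4 * Nat.card B ∧
      ∀ v, (∀ b ∈ B, b * v = v * b) → (∀ r ∈ R, r * v = v * r) → (∀ r ∈ R', r * v = v * r) →
        ∀ b ∈ B', b * v = v * b := by
  have Q := hR.qp
  have Q' := hR'.qp
  have hzz' : ∀ w, z * (z * w) = w := fun w => by rw [← mul_assoc, X.zsq, one_mul]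
  obtain ⟨x, hx, y, hy, hx1, hxz, hy1, hyz, -, -, hanti⟩ := Q.nc
  obtain ⟨x', hx', y', hy', hx1', hxz', hy1', hyz', -, -, hanti'⟩ := Q'.nc
  have hc : ∀ r ∈ R, ∀ s ∈ R', Commute r s := X.pcomm hR hR' hne
  have hprod : ∀ r ∈ R, ∀ s ∈ R', r * r = z → s * s = z → (r * s) * (r * s) = 1 := by
    intro r hr s hs h1 h2
    calc (r * s) * (r * s) = r * (s * r) * s := by group
      _ = (r * r) * (s * s) := by rw [← (hc r hr s hs).eq]; group
      _ = 1 := by rw [h1, h2, X.zsq]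
  have hnexy : x * y ≠ y * x := by
    intro h
    rw [h] at hanti
    exact X.zne (by simpa using hanti.symm)
  have hcomB : ∀ r ∈ R, ∀ s ∈ R', ∀ b ∈ B, b * (r * s) = (r * s) * b := by
    intro r hr s hs b hb
    have h1 : Commute b r := hBR r hr b hb
    exact h1.mul_right (hBR' s hs b hb)
  obtain ⟨B1, hz1, hsq1, hcard1, hcom1⟩ := X.extend B hz hsq (x * x')
    (hprod x hx x' hx' (Q.sq x hx hx1 hxz) (Q'.sq x' hx' hx1' hxz')) (hcomB x hx x' hx') y
    (hBR y hy) (by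
      rw [mul_assoc, ← (hc y hy x' hx').eq, ← mul_assoc, ← mul_assoc]
      exact fun h => hnexy (mul_right_cancel h))
  have hab : Commute (x * x') (y * y') := by
    change x * x' * (y * y') = y * y' * (x * x')
    calc x * x' * (y * y') = x * (x' * y) * y' := by group
      _ = (x * y) * (x' * y') := by rw [← (hc y hy x' hx').eq]; group
      _ = z * (y * x) * (z * (y' * x')) := by rw [hanti, hanti']
      _ = z * (z * (y * x * (y' * x'))) := by
        rw [← mul_assoc (z * (y * x)) z, ← X.zcen (z * (y * x))]; simp only [mul_assoc]
      _ = y * (x * y') * x' := by rw [hzz']; simp only [mul_assoc]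
      _ = _ := by rw [(hc x hx y' hy').eq]; simp only [mul_assoc]
  obtain ⟨B2, hz2, hsq2, hcard2, hcom2⟩ := X.extend B1 hz1 hsq1 (y * y')
    (hprod y hy y' hy' (Q.sq y hy hy1 hyz) (Q'.sq y' hy' hy1' hyz'))
    (hcom1 _ (hcomB y hy y' hy') hab) x
    (hcom1 _ (hBR x hx) (by
      rw [mul_assoc, ← (hc x hx x' hx').eq])) (by
      rw [mul_assoc, ← (hc x hx y' hy').eq, ← mul_assoc, ← mul_assoc]
      exact fun h => hnexy (mul_right_cancel h).symm)
  refine ⟨B2, hz2, hsq2, by rw [hcard2, hcard1]; ring, ?_⟩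
  intro v h1 h2 h3
  have h4 : ∀ r ∈ R, ∀ s ∈ R', r * s * v = v * (r * s) := by
    intro r hr s hs
    have h5 : Commute r v := h2 r hr
    exact h5.mul_left (h3 s hs)
  exact hcom2 v (hcom1 v h1 (h4 x hx x' hx')) (h4 y hy y' hy')

end
end ESA

namespace ESA
section

theorem Ctx.sup_two {W : Type*} [Group W] [Finite W] {p : ℕ} {E : Subgroup (MulAut W)} {z : W}
    (X : Ctx W p E z) {R R' : Subgroup W} (hR : Piece E z R) (hR' : Piece E z R') (hne : R ≠ R') :
    Nat.card (R ⊔ R' : Subgroup W) = 32 := by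
  have Q := hR.qp
  have Q' := hR'.qp
  have := X.normal Q'.zmem
  have h1 := card_sup_mul R R'
  have h2 : R ⊓ R' = Subgroup.center W := by
    apply le_antisymm
    · rintro w ⟨h1, h2⟩
      rw [X.mem_center]
      exact Q.inter Q' hne w h1 h2
    · exact le_inf (X.center_le Q.zmem) (X.center_le Q'.zmem)
  rw [h2, X.card_center, Q.card, Q'.card] at h1
  omega

theorem Ctx.inter_ge {W : Type*} [Group W] [Finite W] {p : ℕ} {E : Subgroup (MulAut W)} {z : W}
    (X : Ctx W p E z) (hW : Nat.card W = 128) (A : Subgroup W) (hA : Nat.card A = 16)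
    {R R' : Subgroup W} (hR : Piece E z R) (hR' : Piece E z R') (hne : R ≠ R') :
    4 ≤ Nat.card (A ⊓ (R ⊔ R') : Subgroup W) := by
  have := X.normal (Subgroup.mem_sup_left hR.qp.zmem : z ∈ R ⊔ R')
  have h1 := card_sup_mul A (R ⊔ R')
  rw [hA, X.sup_two hR hR' hne] at h1
  have h2 := Subgroup.card_le_card_group (A ⊔ (R ⊔ R'))
  rw [hW] at h2
  by_contra! h
  have := Nat.mul_le_mul h2 (Nat.lt_succ_iff.1 h)
  omega

theorem Ctx.inter_mul {W : Type*} [Group W] [Finite W] {p : ℕ} {E : Subgroup (MulAut W)} {z : W}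
    (X : Ctx W p E z) (A : Subgroup W) (hA : Nat.card A = 16)
    (hsq : ∀ a ∈ A, a * a = 1)
    {R R' R'' : Subgroup W} (hR : Piece E z R) (hR' : Piece E z R') (hR'' : Piece E z R'')
    (h1 : R ≠ R') (h2 : R ≠ R'') (h3 : R' ≠ R'') :
    Nat.card (A ⊓ (R ⊔ R') : Subgroup W) * Nat.card (A ⊓ (R ⊔ R'') : Subgroup W) ≤ 32 := by
  have Q := hR.qp
  have Q' := hR'.qp
  have hn := X.normal Q.zmem
  have hc1 : R ⊔ R'' ≤ Subgroup.centralizer (R' : Set W) := by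
    apply sup_le
    · intro s hs
      rw [Subgroup.mem_centralizer_iff]
      intro r hr
      exact X.pcomm hR' hR h1.symm r hr s hs
    · intro s hs
      rw [Subgroup.mem_centralizer_iff]
      intro r hr
      exact X.pcomm hR' hR'' h3 r hr s hs
  have hle : (A ⊓ (R ⊔ R')) ⊓ (A ⊓ (R ⊔ R'')) ≤ Subgroup.center W := by
    rintro w ⟨⟨hwA, hw1⟩, ⟨-, hw2⟩⟩
    have hw1' : w ∈ R ⊔ R' := hw1
    have hw2' : w ∈ R ⊔ R'' := hw2
    have hw3 := Subgroup.mem_centralizer_iff.1 (hc1 hw2')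
    rw [Subgroup.mem_sup_of_normal_left] at hw1'
    obtain ⟨r, hr, s, hs, rfl⟩ := hw1'
    have hs1 : s ∈ Subgroup.center W := by
      rw [X.mem_center]
      apply Q'.center s hs
      intro t ht
      have h4 := hw3 t ht
      have h5 := X.pcomm hR hR' h1 r hr t ht
      rw [← mul_assoc, ← h5, mul_assoc, mul_assoc] at h4
      exact mul_left_cancel h4
    have hrs : r * s ∈ R := R.mul_mem hr (X.center_le Q.zmem hs1)
    rw [X.mem_center]
    by_contra! hcon
    have := Q.sq _ hrs hcon.1 hcon.2
    rw [hsq _ hwA] at this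
    exact X.zne this.symm
  have hcen : Nat.card ((A ⊓ (R ⊔ R')) ⊓ (A ⊓ (R ⊔ R'')) : Subgroup W) ≤ 2 := by
    rw [← X.card_center]
    exact Subgroup.card_le_of_le hle
  have hrel : Nat.card (A ⊓ (R ⊔ R') : Subgroup W) * Nat.card (A ⊓ (R ⊔ R'') : Subgroup W) ≤
      Nat.card A * Nat.card ((A ⊓ (R ⊔ R')) ⊓ (A ⊓ (R ⊔ R'')) : Subgroup W) := by
    set B := A ⊓ (R ⊔ R') with hB
    set C := A ⊓ (R ⊔ R'') with hC
    have e1 := Subgroup.relIndex_mul_relIndex ⊥ (B ⊓ C) C bot_le inf_le_right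
    have e2 := Subgroup.relIndex_mul_relIndex ⊥ B A bot_le inf_le_left
    rw [Subgroup.inf_relIndex_right, Subgroup.relIndex_bot_left, Subgroup.relIndex_bot_left] at e1
    rw [Subgroup.relIndex_bot_left, Subgroup.relIndex_bot_left] at e2
    have e3 : B.relIndex C ≤ B.relIndex A :=
      Subgroup.relIndex_le_of_le_right inf_le_left (by
        intro h
        rw [h, mul_zero] at e2
        omega)
    rw [← e1, ← e2]
    calc Nat.card B * (Nat.card (B ⊓ C : Subgroup W) * B.relIndex C) ≤
        Nat.card B * (Nat.card (B ⊓ C : Subgroup W) * B.relIndex A) := by gcongr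
      _ = _ := by ring
  rw [hA] at hrel
  omega

theorem Ctx.not_plus {W : Type*} [Group W] [Finite W] {p : ℕ} {E : Subgroup (MulAut W)} {z : W}
    (X : Ctx W p E z) (hW : Nat.card W = 128) {R1 R2 R3 : Subgroup W} (h1 : Piece E z R1)
    (h2 : Piece E z R2) (h3 : Piece E z R3) (h12 : R1 ≠ R2) (h13 : R1 ≠ R3) (h23 : R2 ≠ R3)
    (htop : R1 ⊔ R2 ⊔ R3 = ⊤) (A : Subgroup W) (hA : Nat.card A = 16)
    (hsq : ∀ a ∈ A, a * a = 1) : False := by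
  have Q1 := h1.qp
  have Q2 := h2.qp
  have Q3 := h3.qp
  have hn1 := X.normal Q1.zmem
  have hn3 := X.normal Q3.zmem
  have g12 := X.inter_ge hW A hA h1 h2 h12
  have g13 := X.inter_ge hW A hA h1 h3 h13
  have g23 := X.inter_ge hW A hA h2 h3 h23
  have m1 := X.inter_mul A hA hsq h1 h2 h3 h12 h13 h23
  have m2 := X.inter_mul A hA hsq h2 h1 h3 h12.symm h23 h13
  have m3 := X.inter_mul A hA hsq h3 h1 h2 h13.symm h23.symm h12
  rw [sup_comm R2 R1] at m2
  rw [sup_comm R3 R1, sup_comm R3 R2] at m3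
  have d12 := Subgroup.card_dvd_of_le (inf_le_left : A ⊓ (R1 ⊔ R2) ≤ A)
  have d13 := Subgroup.card_dvd_of_le (inf_le_left : A ⊓ (R1 ⊔ R3) ≤ A)
  have d23 := Subgroup.card_dvd_of_le (inf_le_left : A ⊓ (R2 ⊔ R3) ≤ A)
  have hcov : (A : Set W) \ {1} ⊆ (((A ⊓ (R1 ⊔ R2) : Subgroup W) : Set W) \ {1}) ∪
      ((((A ⊓ (R1 ⊔ R3) : Subgroup W) : Set W) \ {1}) ∪
      (((A ⊓ (R2 ⊔ R3) : Subgroup W) : Set W) \ {1})) := by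
    rintro a ⟨ha, ha1⟩
    have hat : a ∈ R1 ⊔ R2 ⊔ R3 := htop ▸ Subgroup.mem_top a
    rw [Subgroup.mem_sup_of_normal_right] at hat
    obtain ⟨b, hb, r3, hr3, rfl⟩ := hat
    rw [Subgroup.mem_sup_of_normal_left] at hb
    obtain ⟨r1, hr1, r2, hr2, rfl⟩ := hb
    by_cases c1 : r1 = 1 ∨ r1 = z
    · right; right
      refine ⟨⟨ha, ?_⟩, ha1⟩
      refine Subgroup.mul_mem _ (Subgroup.mul_mem _ (Subgroup.mem_sup_left ?_)
        (Subgroup.mem_sup_left hr2)) (Subgroup.mem_sup_right hr3)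
      rcases c1 with rfl | rfl
      · exact R2.one_mem
      · exact Q2.zmem
    by_cases c2 : r2 = 1 ∨ r2 = z
    · right; left
      refine ⟨⟨ha, ?_⟩, ha1⟩
      refine Subgroup.mul_mem _ (Subgroup.mul_mem _ (Subgroup.mem_sup_left hr1)
        (Subgroup.mem_sup_left ?_)) (Subgroup.mem_sup_right hr3)
      rcases c2 with rfl | rfl
      · exact R1.one_mem
      · exact Q1.zmem
    by_cases c3 : r3 = 1 ∨ r3 = z
    · left
      refine ⟨⟨ha, ?_⟩, ha1⟩
      refine Subgroup.mul_mem _ (Subgroup.mul_mem _ (Subgroup.mem_sup_left hr1)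
        (Subgroup.mem_sup_right hr2)) (Subgroup.mem_sup_left ?_)
      rcases c3 with rfl | rfl
      · exact R1.one_mem
      · exact Q1.zmem
    exfalso
    push Not at c1 c2 c3
    have e1 := Q1.sq r1 hr1 c1.1 c1.2
    have e2 := Q2.sq r2 hr2 c2.1 c2.2
    have e3 := Q3.sq r3 hr3 c3.1 c3.2
    have k12 : Commute r1 r2 := X.pcomm h1 h2 h12 r1 hr1 r2 hr2
    have k13 : Commute r1 r3 := X.pcomm h1 h3 h13 r1 hr1 r3 hr3
    have k23 : Commute r2 r3 := X.pcomm h2 h3 h23 r2 hr2 r3 hr3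
    have e4 := hsq _ ha
    have e5 : r1 * r2 * r3 * (r1 * r2 * r3) = r1 * r1 * (r2 * r2) * (r3 * r3) := by
      rw [(k13.mul_left k23).symm.mul_mul_mul_comm, k12.symm.mul_mul_mul_comm]
    rw [e5, e1, e2, e3, X.zsq, one_mul] at e4
    exact X.zne e4
  have hcount := (Set.ncard_le_ncard hcov (Set.toFinite _)).trans
    ((Set.ncard_union_le _ _).trans (Nat.add_le_add_left (Set.ncard_union_le _ _) _))
  rw [Set.ncard_sdiff_singleton_of_mem (Subgroup.one_mem _),
    Set.ncard_sdiff_singleton_of_mem (Subgroup.one_mem _),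
    Set.ncard_sdiff_singleton_of_mem (Subgroup.one_mem _),
    Set.ncard_sdiff_singleton_of_mem (Subgroup.one_mem _)] at hcount
  change Nat.card A - 1 ≤ Nat.card (A ⊓ (R1 ⊔ R2) : Subgroup W) - 1 +
    (Nat.card (A ⊓ (R1 ⊔ R3) : Subgroup W) - 1 +
    (Nat.card (A ⊓ (R2 ⊔ R3) : Subgroup W) - 1)) at hcount
  rw [hA] at d12 d13 d23 hcount
  generalize Nat.card (A ⊓ (R1 ⊔ R2) : Subgroup W) = a at *
  generalize Nat.card (A ⊓ (R1 ⊔ R3) : Subgroup W) = b at *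
  generalize Nat.card (A ⊓ (R2 ⊔ R3) : Subgroup W) = c at *
  have hcase : ∀ a : ℕ, a ∣ 16 → 4 ≤ a → a = 4 ∨ a = 8 ∨ a = 16 := by
    intro a h h4
    have := Nat.le_of_dvd (by norm_num) h
    interval_cases a <;> simp_all
  rcases hcase a d12 g12 with rfl | rfl | rfl <;> rcases hcase b d13 g13 with rfl | rfl | rfl <;>
    rcases hcase c d23 g23 with rfl | rfl | rfl <;> omega

theorem Ctx.final {W : Type*} [Group W] [Finite W] {E : Subgroup (MulAut W)} {z : W}
    (X : Ctx W 3 E z) :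
    ((Nat.card W = 2 ^ 5 ∧ ∃ A : Subgroup W, Nat.card A = 2 ^ (2 + 1) ∧ ∀ a ∈ A, a ^ 2 = 1) ∨
     (Nat.card W = 2 ^ 7 ∧ ¬ ∃ A : Subgroup W, Nat.card A = 2 ^ (3 + 1) ∧ ∀ a ∈ A, a ^ 2 = 1) ∨
     (Nat.card W = 2 ^ 9 ∧ ∃ A : Subgroup W, Nat.card A = 2 ^ (4 + 1) ∧ ∀ a ∈ A, a ^ 2 = 1)) := by
  classical
  let F : Finset (Subgroup W) := (Set.toFinite {R | Piece E z R}).toFinset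
  have hF : ∀ R, R ∈ F ↔ Piece E z R := fun R => by simp [F]
  have hle := X.pieces_le F (fun R hR => (hF R).1 hR)
  have hcard := X.card_sup F (fun R hR => (hF R).1 hR)
  have htop : Subgroup.center W ⊔ F.sup id = ⊤ := by
    apply X.cover
    · exact Subgroup.mem_sup_left ((X.mem_center z).2 (Or.inr rfl))
    · intro R hR
      exact le_sup_of_le_right (Finset.le_sup (f := id) ((hF R).2 hR))
  rw [htop, Subgroup.card_top] at hcard
  obtain ⟨-, R, R', hR, hR', hne⟩ := X.cardE
  have hge : 2 ≤ F.card := by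
    have : ({R, R'} : Finset (Subgroup W)) ⊆ F := by
      intro T hT
      rw [Finset.mem_insert, Finset.mem_singleton] at hT
      rcases hT with rfl | rfl
      · exact (hF _).2 hR
      · exact (hF _).2 hR'
    have := Finset.card_le_card this
    rwa [Finset.card_pair hne] at this
  have hcsq : ∀ b ∈ Subgroup.center W, b * b = 1 := by
    intro b hb
    rcases (X.mem_center b).1 hb with rfl | rfl
    · simp
    · exact X.zsq
  have hcc : ∀ b ∈ Subgroup.center W, ∀ r, b * r = r * b := fun b hb r =>
    (Subgroup.mem_center_iff.1 hb r).symm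
  have hzc : z ∈ Subgroup.center W := (X.mem_center z).2 (Or.inr rfl)
  have h3 : F.card = 2 ∨ F.card = 3 ∨ F.card = 4 := by omega
  rcases h3 with h | h | h
  · left
    rw [h] at hcard
    refine ⟨by rw [hcard]; norm_num, ?_⟩
    obtain ⟨B, -, hsq, hB, -⟩ := X.pair (Subgroup.center W) hzc hcsq hR hR' hne
      (fun r _ b hb => hcc b hb r) (fun r _ b hb => hcc b hb r)
    refine ⟨B, by rw [hB, X.card_center]; norm_num, fun a ha => by rw [pow_two, hsq a ha]⟩
  · right; left
    rw [h] at hcard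
    refine ⟨by rw [hcard]; norm_num, ?_⟩
    rintro ⟨A, hA, hsq⟩
    obtain ⟨R1, R2, R3, h12, h13, h23, hFe⟩ := Finset.card_eq_three.1 h
    have p1 : Piece E z R1 := (hF R1).1 (by simp [hFe])
    have p2 : Piece E z R2 := (hF R2).1 (by simp [hFe])
    have p3 : Piece E z R3 := (hF R3).1 (by simp [hFe])
    refine X.not_plus (by rw [hcard]; norm_num) p1 p2 p3 h12 h13 h23 ?_ A
      (by rw [hA]; norm_num) (fun a ha => by rw [← pow_two, hsq a ha])
    apply X.cover
    · exact Subgroup.mem_sup_right p3.qp.zmem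
    · intro T hT
      have := (hF T).2 hT
      rw [hFe] at this
      simp only [Finset.mem_insert, Finset.mem_singleton] at this
      rcases this with rfl | rfl | rfl
      · exact le_sup_of_le_left le_sup_left
      · exact le_sup_of_le_left le_sup_right
      · exact le_sup_right
  · right; right
    rw [h] at hcard
    refine ⟨by rw [hcard]; norm_num, ?_⟩
    let g := (F.equivFinOfCardEq h).symm
    have hg : ∀ i, Piece E z (g i).1 := fun i => (hF _).1 (g i).2
    have hgi : ∀ i j, i ≠ j → (g i).1 ≠ (g j).1 := fun i j hij h =>
      hij (g.injective (Subtype.ext h))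
    obtain ⟨B, hzB, hsq, hB, hcom⟩ := X.pair (Subgroup.center W) hzc hcsq (hg 0) (hg 1)
      (hgi 0 1 (by decide)) (fun r _ b hb => hcc b hb r) (fun r _ b hb => hcc b hb r)
    obtain ⟨B', -, hsq', hB', -⟩ := X.pair B hzB hsq (hg 2) (hg 3) (hgi 2 3 (by decide))
      (fun r hr => hcom r (fun b hb => hcc b hb r)
        (fun s hs => X.pcomm (hg 0) (hg 2) (hgi 0 2 (by decide)) s hs r hr)
        (fun s hs => X.pcomm (hg 1) (hg 2) (hgi 1 2 (by decide)) s hs r hr))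
      (fun r hr => hcom r (fun b hb => hcc b hb r)
        (fun s hs => X.pcomm (hg 0) (hg 3) (hgi 0 3 (by decide)) s hs r hr)
        (fun s hs => X.pcomm (hg 1) (hg 3) (hgi 1 3 (by decide)) s hs r hr))
    refine ⟨B', by rw [hB', hB, X.card_center]; norm_num, fun a ha => by rw [pow_two, hsq' a ha]⟩

end
end ESA

theorem extraspecial_of_automorphisms {W : Type*} [Group W] [Finite W]
    (hW : IsPGroup 2 W) (p : ℕ) (hp : p.Prime) (hodd : Odd p)
    (E : Subgroup (MulAut W)) (hE : IsPGroup p ↥E)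
    (hEab : ∀ a ∈ E, ∀ b ∈ E, a * b = b * a) (hEnc : ¬ IsCyclic ↥E)
    (hfix : ∀ e ∈ E, e ≠ 1 → {w : W | e w = w ∧ orderOf w = 2}.Subsingleton) :
    p = 3 ∧ Nat.card E = 9 ∧ IsExtraspecial W ∧
      ((Nat.card W = 2 ^ 5 ∧ IsPlusType W 2) ∨
       (Nat.card W = 2 ^ 7 ∧ ¬ IsPlusType W 3) ∨
       (Nat.card W = 2 ^ 9 ∧ IsPlusType W 4)) ∧
      fixedSubgroup E = Subgroup.center W := by
  have S : ESA.Setup W p E := ⟨hW, hp, hodd, hE, hEab, hEnc⟩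
  obtain ⟨hp3, z, X⟩ := S.stage5 hfix
  subst hp3
  refine ⟨rfl, X.cardE.1, ⟨X.extraspecial.1, X.extraspecial.2, X.card_center⟩, X.final, ?_⟩
  ext w
  rw [X.mem_center]
  constructor
  · exact fun h => X.fixE w h
  · rintro (rfl | rfl)
    · exact Subgroup.one_mem _
    · exact fun e he => X.zfix e he
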